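/- Let p ≥ 2 be an integer and α ∈ (0, 1/(p−1)). Let (c_k)_{k≥1} be complex numbers with Σ_{k=1}^∞ |c_k|^α < ∞, let (φ_k)_{k≥1} be real numbers, and let γ_k : (0,∞) → ℂ be functions of bounded variation with sup_k Var(γ_k,(0,∞)) < ∞ and ∫_0^∞ (sup_k |γ_k(x)|)^p dx < ∞. Suppose the potential V(x) = Σ_{k=1}^∞ c_k e^{−iφ_k x} γ_k(x) is real-valued. Then the set S = {E > 0 : some solution of −u'' + V u = E u on (0,∞) is unbounded} has Hausdorff dimension at most (p−1)α. -/

import Mathlib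

open scoped BigOperators ENNReal
open MeasureTheory

/-- `u` (with derivative `u'`) is a solution of `-u'' + V u = E u` on `(0,∞)`:
`u` is differentiable with derivative `u'`, and `u'` is locally absolutely continuous
with `-u'' + V u = E u` almost everywhere, encoded in integral (FTC) form. -/
def IsWeakSolution (V : ℝ → ℝ) (E : ℝ) (u u' : ℝ → ℂ) : Prop :=
  (∀ x ∈ Set.Ioi (0:ℝ), HasDerivAt u (u' x) x) ∧
  ∀ a b : ℝ, 0 < a → a ≤ b →
    IntervalIntegrable (fun x => (V x : ℂ) * u x - (E : ℂ) * u x) volume a b ∧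
    u' b - u' a = ∫ x in a..b, ((V x : ℂ) * u x - (E : ℂ) * u x)

/-!
A solution `A → 1` of the Riccati equation `A' = 2iη(A - 1) + V A² / (2iη)` gives, by a change of
variables, the logarithmic derivative of a solution of `-u'' + V u = η² u` whose imaginary part
stays away from `0`. Even an approximate one, with integrable error, provides a positive quadratic
form in `(u, u')` that is almost conserved, so that every solution is bounded.

Inserting `V = ∑ cₖ fₖ` into the quadratic equation produces a series over binary trees: a tree
contributes the product of the waves `fₖ` of its nodes, whose frequencies add up, over the small
denominators `2η(2η + frequency)` of its subtrees. Only trees with fewer than `p` nodes are kept;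
what is discarded contains at least `p` waves, hence is integrable by the `Lᵖ` bound. The amplitudes
are first averaged so that the waves become differentiable, at the price of an integrable error.

A tree has at most `p - 1` denominators, so by `∑ |cₖ|^α < ∞` the coefficients are summable once the
Riesz potential of order `(p - 1)α` of a finite measure, carried by the resonant values of `2η`, is
finite at `2η`. The infinities of such a potential have dimension at most `(p - 1)α`.
-/

open Filter Metric Set Topology
open scoped NNReal

section RieszPotential

variable {X : Type*} [MetricSpace X] {s β : ℝ}

theorem ofReal_two_inv_pow (n : ℕ) : ENNReal.ofReal (2⁻¹ ^ n) = 2 ^ (-(n : ℝ)) := by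
  rw [ENNReal.rpow_neg, ENNReal.rpow_natCast, ENNReal.ofReal_pow (by norm_num),
    ENNReal.ofReal_inv_of_pos two_pos, ENNReal.ofReal_ofNat, ENNReal.inv_pow]

theorem rpow_neg_le_two_rpow (hs : 0 ≤ s) {n : ℕ} {d : ℝ≥0∞}
    (h : ENNReal.ofReal (2⁻¹ ^ n) ≤ d) : d ^ (-s) ≤ 2 ^ (n * s) := by
  rw [show (2 : ℝ≥0∞) ^ (n * s) = (2 ^ (-(n : ℝ))) ^ (-s) by rw [← ENNReal.rpow_mul, neg_mul_neg],
    ← ofReal_two_inv_pow]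
  simp only [ENNReal.rpow_neg _ s]
  exact ENNReal.inv_le_inv.2 (ENNReal.rpow_le_rpow h hs)

theorem edist_rpow_neg_le_tsum_indicator_closedBall (hs : 0 ≤ s) (x y : X) (N : ℕ) :
    edist x y ^ (-s) ≤ 2 ^ (N * s) + ∑' j : ℕ,
      (closedBall x (2⁻¹ ^ (N + j))).indicator (fun _ => 2 ^ ((N + j + 1 : ℕ) * s)) y := by
  have mem_ball {n : ℕ} (h : edist x y ≤ ENNReal.ofReal (2⁻¹ ^ n)) :
      y ∈ closedBall x (2⁻¹ ^ n) := by
    rwa [mem_closedBall', ← edist_le_ofReal (by positivity)]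
  by_cases hN : ENNReal.ofReal (2⁻¹ ^ N) < edist x y
  · exact (rpow_neg_le_two_rpow hs hN.le).trans le_self_add
  refine le_add_left ?_
  by_cases hxy : edist x y = 0
  · have one_le (j : ℕ) : 1 ≤ (closedBall x (2⁻¹ ^ (N + j))).indicator
        (fun _ => (2 : ℝ≥0∞) ^ ((N + j + 1 : ℕ) * s)) y := by
      rw [indicator_of_mem (mem_ball (by simp [hxy]))]
      simpa using ENNReal.rpow_le_rpow_of_exponent_le one_le_two
        (show 0 ≤ (N + j + 1 : ℕ) * s by positivity)
    calc edist x y ^ (-s) ≤ ∑' _ : ℕ, 1 := by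
          simp [ENNReal.tsum_const_eq_top_of_ne_zero one_ne_zero]
      _ ≤ _ := ENNReal.tsum_le_tsum one_le
  obtain ⟨j, hj, hj'⟩ : ∃ j, ¬ ENNReal.ofReal (2⁻¹ ^ (N + j)) < edist x y ∧
      ENNReal.ofReal (2⁻¹ ^ (N + (j + 1))) < edist x y := by
    refine Nat.exists_not_and_succ_of_not_zero_of_exists
      (p := fun j => ENNReal.ofReal (2⁻¹ ^ (N + j)) < edist x y) hN ?_
    have hlim : Tendsto (fun j : ℕ => ENNReal.ofReal (2⁻¹ ^ (N + j))) atTop (𝓝 0) := by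
      simpa only [ENNReal.ofReal_zero, add_comm N] using ENNReal.tendsto_ofReal
        ((tendsto_add_atTop_iff_nat N).2
          (tendsto_pow_atTop_nhds_zero_of_lt_one (r := (2⁻¹ : ℝ)) (by norm_num) (by norm_num)))
    exact (hlim.eventually_lt_const (pos_iff_ne_zero.2 hxy)).exists
  refine le_trans ?_ (ENNReal.le_tsum j)
  rw [indicator_of_mem (mem_ball (not_lt.1 hj))]
  exact rpow_neg_le_two_rpow hs hj'.le

variable [MeasurableSpace X] {ν : Measure X}

/-- The Riesz potential `x ↦ ∫ d(x, y)⁻ˢ dν(y)` of order `s` of a measure `ν`. Its infinities are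
meant to be genuine, so it takes values in `ℝ≥0∞`, where `0 ^ (-s) = ⊤` for `s > 0`. -/
noncomputable def rieszPotential (ν : Measure X) (s : ℝ) (x : X) : ℝ≥0∞ :=
  ∫⁻ y, edist x y ^ (-s) ∂ν

variable [BorelSpace X]

theorem rieszPotential_le_tsum_measure_closedBall (hs : 0 ≤ s) (x : X) (N : ℕ) :
    rieszPotential ν s x ≤ 2 ^ (N * s) * ν univ +
      ∑' j : ℕ, 2 ^ ((N + j + 1 : ℕ) * s) * ν (closedBall x (2⁻¹ ^ (N + j))) := by
  refine (lintegral_mono fun y =>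
    edist_rpow_neg_le_tsum_indicator_closedBall hs x y N).trans_eq ?_
  rw [lintegral_add_left measurable_const, lintegral_const, lintegral_tsum fun j =>
    (measurable_const.indicator isClosed_closedBall.measurableSet).aemeasurable]
  simp only [lintegral_indicator_const isClosed_closedBall.measurableSet]

theorem tsum_two_rpow_neg_mul_ne_top {δ : ℝ} (hδ : 0 < δ) :
    ∑' j : ℕ, (2 : ℝ≥0∞) ^ (-δ * j) ≠ ⊤ := by
  simp_rw [ENNReal.rpow_mul, ENNReal.rpow_natCast, ENNReal.tsum_geometric]
  exact ENNReal.inv_ne_top.2 (tsub_pos_of_lt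
    (ENNReal.rpow_lt_one_of_one_lt_of_neg ENNReal.one_lt_two (neg_lt_zero.2 hδ))).ne'

theorem exists_rpow_le_measure_closedBall_of_rieszPotential_eq_top [IsFiniteMeasure ν]
    (hs : 0 ≤ s) (hsβ : s < β) {x : X} (hx : rieszPotential ν s x = ⊤) {ε : ℝ} (hε : 0 < ε) :
    ∃ r ∈ Ioo 0 ε, ENNReal.ofReal r ^ β ≤ ν (closedBall x r) := by
  by_contra! hsmall
  obtain ⟨N, hN⟩ := exists_pow_lt_of_lt_one hε (y := (2⁻¹ : ℝ)) (by norm_num)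
  have hball (j : ℕ) : 2 ^ ((N + j + 1 : ℕ) * s) * ν (closedBall x (2⁻¹ ^ (N + j))) ≤
      2 ^ s * 2 ^ (-(β - s) * j) := by
    have hr : (2⁻¹ : ℝ) ^ (N + j) < ε :=
      (pow_le_pow_of_le_one (by norm_num) (by norm_num) (Nat.le_add_right N j)).trans_lt hN
    refine (mul_le_mul_right (hsmall _ ⟨by positivity, hr⟩).le _).trans ?_
    rw [ofReal_two_inv_pow, ← ENNReal.rpow_mul, ← ENNReal.rpow_add _ _ two_ne_zero (by simp),
      ← ENNReal.rpow_add _ _ two_ne_zero (by simp)]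
    refine ENNReal.rpow_le_rpow_of_exponent_le one_le_two ?_
    push_cast
    nlinarith [mul_nonneg (Nat.cast_nonneg (α := ℝ) N) (sub_nonneg.2 hsβ.le)]
  have hfin : 2 ^ (N * s) * ν univ + ∑' j : ℕ, (2 : ℝ≥0∞) ^ s * 2 ^ (-(β - s) * j) ≠ ⊤ := by
    have two_rpow_ne_top (y : ℝ) : (2 : ℝ≥0∞) ^ y ≠ ⊤ :=
      ENNReal.rpow_ne_top_of_ne_zero two_ne_zero (by simp)
    rw [ENNReal.tsum_mul_left]
    exact ENNReal.add_ne_top.2 ⟨ENNReal.mul_ne_top (two_rpow_ne_top _) (measure_ne_top ν _),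
      ENNReal.mul_ne_top (two_rpow_ne_top _) (tsum_two_rpow_neg_mul_ne_top (sub_pos.2 hsβ))⟩
  exact hfin (top_le_iff.1 (hx ▸ (rieszPotential_le_tsum_measure_closedBall hs x N).trans
    (add_le_add_right (ENNReal.tsum_le_tsum hball) _)))

theorem exists_countable_closedBall_cover [IsFiniteMeasure ν] {S : Set X}
    (hS : ∀ x ∈ S, ∀ ε > 0, ∃ r ∈ Ioo 0 ε, ENNReal.ofReal r ^ β ≤ ν (closedBall x r))
    {ε : ℝ} (hε : 0 < ε) :
    ∃ u : Set (X × ℝ), u.Countable ∧ (∀ a ∈ u, a.2 ∈ Ioo 0 ε) ∧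
      S ⊆ ⋃ a : u, closedBall a.1.1 (5 * a.1.2) ∧
      ∑' a : u, ENNReal.ofReal a.1.2 ^ β ≤ ν univ := by
  obtain ⟨u, hut, hdisj, hcover⟩ := Vitali.exists_disjoint_subfamily_covering_enlargement_closedBall
    {a : X × ℝ | a.2 ∈ Ioo 0 ε ∧ ENNReal.ofReal a.2 ^ β ≤ ν (closedBall a.1 a.2)}
    Prod.fst Prod.snd ε (fun a ha => ha.1.2.le) 5 (by norm_num)
  have hmeas (a : u) : MeasurableSet (closedBall a.1.1 a.1.2) := isClosed_closedBall.measurableSet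
  have hdisj' : Pairwise (Function.onFun Disjoint fun a : u => closedBall a.1.1 a.1.2) :=
    fun a b hab => hdisj a.2 b.2 (Subtype.coe_injective.ne hab)
  refine ⟨u, ?_, fun a ha => (hut ha).1, fun x hx => ?_, ?_⟩
  · have hpos (a : u) : 0 < ν (closedBall a.1.1 a.1.2) :=
      (ENNReal.rpow_pos (ENNReal.ofReal_pos.2 (hut a.2).1.1) ENNReal.ofReal_ne_top).trans_le
        (hut a.2).2
    have := Measure.countable_meas_pos_of_disjoint_iUnion (μ := ν) hmeas hdisj'
    rwa [show {a : u | 0 < ν (closedBall a.1.1 a.1.2)} = univ from eq_univ_of_forall hpos,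
      countable_univ_iff] at this
  · obtain ⟨r, hr, hνr⟩ := hS x hx ε hε
    obtain ⟨b, hb, hxb⟩ := hcover (x, r) ⟨hr, hνr⟩
    exact mem_iUnion.2 ⟨⟨b, hb⟩, hxb (mem_closedBall_self hr.1.le)⟩
  · calc ∑' a : u, ENNReal.ofReal a.1.2 ^ β ≤ ∑' a : u, ν (closedBall a.1.1 a.1.2) :=
          ENNReal.tsum_le_tsum fun a => (hut a.2).2
      _ ≤ ν (⋃ a : u, closedBall a.1.1 a.1.2) :=
          tsum_meas_le_meas_iUnion_of_disjoint ν hmeas hdisj'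
      _ ≤ ν univ := measure_mono (subset_univ _)

theorem hausdorffMeasure_le_of_rpow_le_measure_closedBall [IsFiniteMeasure ν] (hβ : 0 ≤ β)
    {S : Set X}
    (hS : ∀ x ∈ S, ∀ ε > 0, ∃ r ∈ Ioo 0 ε, ENNReal.ofReal r ^ β ≤ ν (closedBall x r)) :
    Measure.hausdorffMeasure β S ≤ 10 ^ β * ν univ := by
  choose u hcount hrad hcover hsum using fun n : ℕ =>
    exists_countable_closedBall_cover hS (Nat.one_div_pos_of_nat (n := n) (α := ℝ))
  have ediam_le (n : ℕ) (a : u n) :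
      ediam (closedBall a.1.1 (5 * a.1.2)) ≤ 10 * ENNReal.ofReal a.1.2 := by
    have h0 := (hrad n a a.2).1.le
    rw [← closedEBall_ofReal (by positivity)]
    refine ediam_closedEBall_le.trans_eq ?_
    rw [ENNReal.ofReal_mul (by norm_num), ENNReal.ofReal_ofNat, ← mul_assoc]
    norm_num
  have hlim : Tendsto (fun n : ℕ => 10 * ENNReal.ofReal (1 / (n + 1))) atTop (𝓝 0) := by
    simpa using ENNReal.Tendsto.const_mul (a := 10)
      (ENNReal.tendsto_ofReal tendsto_one_div_add_atTop_nhds_zero_nat) (.inr (by simp))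
  have (n : ℕ) : Countable (u n) := (hcount n).to_subtype
  refine (Measure.hausdorffMeasure_le_liminf_tsum β S _ hlim
    (fun n (a : u n) => closedBall a.1.1 (5 * a.1.2))
    (.of_forall fun n a => (ediam_le n a).trans (by gcongr; exact (hrad n a a.2).2.le))
    (.of_forall hcover)).trans ?_
  refine liminf_le_of_frequently_le' (.of_forall fun n => ?_)
  calc ∑' a : u n, ediam (closedBall a.1.1 (5 * a.1.2)) ^ β
      ≤ ∑' a : u n, 10 ^ β * ENNReal.ofReal a.1.2 ^ β := ENNReal.tsum_le_tsum fun a => by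
        rw [← ENNReal.mul_rpow_of_nonneg _ _ hβ]
        exact ENNReal.rpow_le_rpow (ediam_le n a) hβ
    _ ≤ 10 ^ β * ν univ := by
        rw [ENNReal.tsum_mul_left]
        gcongr
        exact hsum n

theorem dimH_rieszPotential_eq_top_le [IsFiniteMeasure ν] (hs : 0 ≤ s) :
    dimH {x | rieszPotential ν s x = ⊤} ≤ ENNReal.ofReal s := by
  refine le_of_forall_gt fun d hd => ?_
  obtain ⟨β, hsβ, hβd⟩ := ENNReal.lt_iff_exists_nnreal_btwn.1 hd
  refine (dimH_le_of_hausdorffMeasure_ne_top ?_).trans_lt hβd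
  rw [← ENNReal.ofReal_coe_nnreal, ENNReal.ofReal_lt_ofReal_iff_of_nonneg hs] at hsβ
  exact ne_top_of_le_ne_top
    (ENNReal.mul_ne_top (ENNReal.rpow_ne_top_of_nonneg β.2 (by simp)) (measure_ne_top ν univ))
    (hausdorffMeasure_le_of_rpow_le_measure_closedBall β.2 fun x hx ε hε =>
      exists_rpow_le_measure_closedBall_of_rieszPotential_eq_top hs hsβ hx hε)

end RieszPotential

section Multiset

theorem exists_mem_multiset_prod_le_pow_card {m : Multiset ℝ≥0∞} (hm : m ≠ 0) :
    ∃ M ∈ m, m.prod ≤ M ^ m.card := by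
  obtain ⟨M, hM, hmax⟩ := m.toFinset.exists_max_image id (Multiset.toFinset_nonempty.2 hm)
  simp only [Multiset.mem_toFinset, id] at hM hmax
  exact ⟨M, hM, Multiset.prod_le_pow_card m M hmax⟩

theorem pow_le_multiset_sum_pow {m : Multiset ℝ≥0∞} {M : ℝ≥0∞} (hM : M ∈ m) (q : ℕ) :
    M ^ q ≤ (m.map (· ^ q)).sum :=
  Multiset.single_le_sum (fun _ _ => zero_le) _ (Multiset.mem_map_of_mem _ hM)

theorem multiset_prod_le_one_add_sum_pow {m : Multiset ℝ≥0∞} {q : ℕ} (hq : m.card ≤ q) :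
    m.prod ≤ 1 + (m.map (· ^ q)).sum := by
  rcases eq_or_ne m 0 with rfl | hm
  · simp
  obtain ⟨M, hM, hprod⟩ := exists_mem_multiset_prod_le_pow_card hm
  rcases le_total M 1 with h1 | h1
  · exact (hprod.trans (pow_le_one₀ zero_le h1)).trans le_self_add
  · exact (hprod.trans (pow_le_pow_right₀ h1 hq)).trans
      ((pow_le_multiset_sum_pow hM q).trans le_add_self)

theorem multiset_prod_le_pow_mul_sum_pow {m : Multiset ℝ≥0∞} {q : ℕ} (hq : q ≠ 0)
    (hm : q ≤ m.card) {b : ℝ≥0∞} (hb : ∀ y ∈ m, y ≤ b) :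
    m.prod ≤ b ^ (m.card - q) * (m.map (· ^ q)).sum := by
  obtain ⟨M, hM, hprod⟩ := exists_mem_multiset_prod_le_pow_card (m := m)
    (by rintro rfl; exact hq (Nat.le_zero.1 hm))
  calc m.prod ≤ M ^ (m.card - q) * M ^ q := by rwa [← pow_add, Nat.sub_add_cancel hm]
    _ ≤ _ := by gcongr; exacts [hb M hM, pow_le_multiset_sum_pow hM q]

theorem enorm_multiset_map_prod_rpow {ι : Type*} (m : Multiset ι) (f : ι → ℂ) {α : ℝ} (hα : 0 ≤ α) :
    ‖(m.map f).prod‖ₑ ^ α = (m.map fun i => ‖f i‖ₑ ^ α).prod := by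
  induction m using Multiset.induction with
  | empty => simp
  | cons a m ih => simp [ENNReal.mul_rpow_of_nonneg _ _ hα, ih]

end Multiset

section Series

theorem tsum_ne_top_of_tsum_rpow_ne_top {ι : Type*} {f : ι → ℝ≥0∞} {α : ℝ} (h0 : 0 < α)
    (h1 : α ≤ 1) (hf : ∑' i, f i ^ α ≠ ⊤) : ∑' i, f i ≠ ⊤ := by
  set M := ∑' i, f i ^ α
  have hle (i : ι) : f i ≤ f i ^ α * (M ^ α⁻¹) ^ (1 - α) := by
    have hM : f i ≤ M ^ α⁻¹ := (ENNReal.le_rpow_inv_iff h0).2 (ENNReal.le_tsum i)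
    calc f i = f i ^ α * f i ^ (1 - α) := by
          rw [← ENNReal.rpow_add_of_nonneg _ _ h0.le (by linarith), add_sub_cancel,
            ENNReal.rpow_one]
      _ ≤ _ := by gcongr
  refine ne_top_of_le_ne_top ?_ (ENNReal.tsum_le_tsum hle)
  rw [ENNReal.tsum_mul_right]
  refine ENNReal.mul_ne_top hf (ENNReal.rpow_ne_top_of_nonneg (by linarith)
    (ENNReal.rpow_ne_top_of_nonneg (by positivity) hf))

theorem tsum_triple_mul {α β γ : Type*} (f : α → ℝ≥0∞) (g : β → ℝ≥0∞) (h : γ → ℝ≥0∞) :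
    ∑' q : α × β × γ, f q.1 * (g q.2.1 * h q.2.2) = (∑' a, f a) * ((∑' b, g b) * ∑' c, h c) := by
  simp_rw [ENNReal.tsum_prod', ENNReal.tsum_mul_left, ENNReal.tsum_mul_right]

theorem hasSum_triple_mul {α β γ R : Type*} [NormedRing R] [CompleteSpace R] {f : α → R}
    {g : β → R} {h : γ → R} (hf : Summable fun a => ‖f a‖) (hg : Summable fun b => ‖g b‖)
    (hh : Summable fun c => ‖h c‖) :
    HasSum (fun q : α × β × γ => f q.1 * (g q.2.1 * h q.2.2))
      ((∑' a, f a) * ((∑' b, g b) * ∑' c, h c)) := by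
  have hgh := hg.mul_norm hh
  rw [tsum_mul_tsum_of_summable_norm hg hh, tsum_mul_tsum_of_summable_norm hf hgh]
  exact (summable_mul_of_summable_norm hf hgh).hasSum

end Series

section BinaryTree

variable {ι : Type*}

/-- The nodes-and-children description of binary trees, used to split series over trees. -/
def binaryTreeEquiv (ι : Type*) : BinaryTree ι ≃ Unit ⊕ (ι × BinaryTree ι × BinaryTree ι) where
  toFun
    | .nil => .inl ()
    | .node k l r => .inr (k, l, r)
  invFun := Sum.elim (fun _ => .nil) fun q => .node q.1 q.2.1 q.2.2
  left_inv := by rintro (_ | ⟨k, l, r⟩) <;> rfl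
  right_inv := by rintro (_ | ⟨k, l, r⟩) <;> rfl

theorem hasSum_binaryTree {G : Type*} [AddCommMonoid G] [TopologicalSpace G] [ContinuousAdd G]
    {f : BinaryTree ι → G} {a : G}
    (hf : HasSum (fun q : ι × BinaryTree ι × BinaryTree ι => f (.node q.1 q.2.1 q.2.2)) a) :
    HasSum f (f .nil + a) := by
  rw [← (binaryTreeEquiv ι).symm.hasSum_iff]
  exact HasSum.sum (hasSum_unique fun _ : Unit => f .nil) hf

theorem tsum_binaryTree (f : BinaryTree ι → ℝ≥0∞) :
    ∑' t, f t = f .nil + ∑' q : ι × BinaryTree ι × BinaryTree ι, f (.node q.1 q.2.1 q.2.2) :=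
  (hasSum_binaryTree ENNReal.summable.hasSum).tsum_eq

theorem countable_numNodes_lt [Countable ι] (n : ℕ) :
    {t : BinaryTree ι | t.numNodes < n}.Countable := by
  induction n with
  | zero => simp
  | succ n ih =>
    refine (((countable_univ.prod (ih.prod ih)).image
      fun q : ι × BinaryTree ι × BinaryTree ι => .node q.1 q.2.1 q.2.2).insert .nil).mono ?_
    rintro (_ | ⟨k, l, r⟩) ht
    · exact .inl rfl
    · have hlr : l.numNodes < n ∧ r.numNodes < n := by
        simp only [mem_ofPred_eq, BinaryTree.numNodes] at ht
        omega
      exact .inr ⟨(k, l, r), ⟨trivial, hlr⟩, rfl⟩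

instance instCountableBinaryTree [Countable ι] : Countable (BinaryTree ι) :=
  countable_univ_iff.1 <| (countable_iUnion countable_numNodes_lt).mono fun t _ =>
    mem_iUnion.2 ⟨t.numNodes + 1, Nat.lt_succ_self _⟩

/-- The labels of the nodes of a binary tree, with multiplicity. -/
def treeLabels : BinaryTree ι → Multiset ι
  | .nil => 0
  | .node k l r => k ::ₘ (treeLabels l + treeLabels r)

/-- The nonempty subtrees of a binary tree, one for each node. -/
def treeSubtrees : BinaryTree ι → Multiset (BinaryTree ι)
  | .nil => 0
  | .node k l r => .node k l r ::ₘ (treeSubtrees l + treeSubtrees r)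

@[simp]
theorem card_treeLabels (t : BinaryTree ι) : (treeLabels t).card = t.numNodes := by
  induction t with
  | nil => rfl
  | node k l r hl hr => simp [treeLabels, BinaryTree.numNodes, hl, hr]

@[simp]
theorem card_treeSubtrees (t : BinaryTree ι) : (treeSubtrees t).card = t.numNodes := by
  induction t with
  | nil => rfl
  | node k l r hl hr => simp [treeSubtrees, BinaryTree.numNodes, hl, hr]

/-- The product of the weights of the labels of a tree with fewer than `n` nodes; larger trees
have weight zero. -/
noncomputable def truncWeight (n : ℕ) (w : ι → ℝ≥0∞) (t : BinaryTree ι) : ℝ≥0∞ :=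
  if t.numNodes < n then ((treeLabels t).map w).prod else 0

theorem truncWeight_mono {n p : ℕ} (h : n ≤ p) (w : ι → ℝ≥0∞) (t : BinaryTree ι) :
    truncWeight n w t ≤ truncWeight p w t := by
  unfold truncWeight
  split_ifs with hn hp
  exacts [le_rfl, absurd (hn.trans_le h) hp, zero_le, le_rfl]

theorem truncWeight_succ_node_le (n : ℕ) (w : ι → ℝ≥0∞) (k : ι) (l r : BinaryTree ι) :
    truncWeight (n + 1) w (.node k l r) ≤ w k * (truncWeight n w l * truncWeight n w r) := by
  by_cases h : (BinaryTree.node k l r).numNodes < n + 1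
  · have hlr : l.numNodes < n ∧ r.numNodes < n := by
      simp only [BinaryTree.numNodes] at h
      omega
    rw [truncWeight, if_pos h]
    simp [truncWeight, hlr, treeLabels]
  · rw [truncWeight, if_neg h]
    exact zero_le

variable {w : ι → ℝ≥0∞}

theorem tsum_truncWeight_ne_top (hw : ∑' k, w k ≠ ⊤) (n : ℕ) : ∑' t, truncWeight n w t ≠ ⊤ := by
  induction n with
  | zero => simp [truncWeight]
  | succ n ih =>
    rw [tsum_binaryTree]
    refine ENNReal.add_ne_top.2 ⟨by simp [truncWeight, treeLabels], ?_⟩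
    refine ne_top_of_le_ne_top (ENNReal.mul_ne_top hw (ENNReal.mul_ne_top ih ih)) ?_
    rw [← tsum_triple_mul]
    exact ENNReal.tsum_le_tsum fun q => truncWeight_succ_node_le n w _ _ _

theorem tsum_truncWeight_mul_sum_treeSubtrees_ne_top (hw : ∑' k, w k ≠ ⊤) {p : ℕ}
    {y : BinaryTree ι → ℝ≥0∞} (hy : ∑' t, truncWeight p w t * y t ≠ ⊤) {n : ℕ} (hn : n ≤ p) :
    ∑' t, truncWeight n w t * ((treeSubtrees t).map y).sum ≠ ⊤ := by
  induction n with
  | zero => simp [truncWeight]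
  | succ n ih =>
    let W := truncWeight n w
    let z (t : BinaryTree ι) := W t * ((treeSubtrees t).map y).sum
    have hnode (q : ι × BinaryTree ι × BinaryTree ι) :
        truncWeight (n + 1) w (.node q.1 q.2.1 q.2.2) *
            ((treeSubtrees (.node q.1 q.2.1 q.2.2)).map y).sum ≤
          truncWeight p w (.node q.1 q.2.1 q.2.2) * y (.node q.1 q.2.1 q.2.2) +
            (w q.1 * (z q.2.1 * W q.2.2) + w q.1 * (W q.2.1 * z q.2.2)) := by
      simp only [treeSubtrees, Multiset.map_cons, Multiset.map_add, Multiset.sum_cons,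
        Multiset.sum_add]
      rw [mul_add]
      refine add_le_add (mul_le_mul_left (truncWeight_mono hn w _) _)
        ((mul_le_mul_left (truncWeight_succ_node_le n w _ _ _) _).trans_eq ?_)
      simp only [z, W]
      ring
    rw [tsum_binaryTree]
    refine ENNReal.add_ne_top.2 ⟨by simp [treeSubtrees], ?_⟩
    refine ne_top_of_le_ne_top ?_ (ENNReal.tsum_le_tsum hnode)
    have hW : ∑' t, W t ≠ ⊤ := tsum_truncWeight_ne_top hw n
    have hz : ∑' t, z t ≠ ⊤ := ih (Nat.le_of_succ_le hn)
    rw [ENNReal.tsum_add, ENNReal.tsum_add, tsum_triple_mul, tsum_triple_mul]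
    refine ENNReal.add_ne_top.2 ⟨?_, ENNReal.add_ne_top.2
      ⟨ENNReal.mul_ne_top hw (ENNReal.mul_ne_top hz hW),
        ENNReal.mul_ne_top hw (ENNReal.mul_ne_top hW hz)⟩⟩
    rw [tsum_binaryTree] at hy
    exact (ENNReal.add_ne_top.1 hy).2

end BinaryTree

section TreeCoefficients

variable {ι : Type*}

/-- The frequency of a tree: the sum of the frequencies `φ k` of its labels. -/
def treeFreq (φ : ι → ℝ) (t : BinaryTree ι) : ℝ :=
  ((treeLabels t).map φ).sum

/-- The discrete measure on `ℝ` that puts the truncated weight of each tree at the negative of its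
frequency. Its Riesz potential at `2η` controls the small denominators `2η + treeFreq φ t`. -/
noncomputable def treeMeasure (p : ℕ) (w : ι → ℝ≥0∞) (φ : ι → ℝ) : Measure ℝ :=
  Measure.sum fun t => truncWeight p w t • Measure.dirac (-treeFreq φ t)

theorem isFiniteMeasure_treeMeasure {w : ι → ℝ≥0∞} (hw : ∑' k, w k ≠ ⊤) (p : ℕ) (φ : ι → ℝ) :
    IsFiniteMeasure (treeMeasure p w φ) := by
  refine ⟨?_⟩
  simpa [treeMeasure, lt_top_iff_ne_top] using tsum_truncWeight_ne_top hw p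

theorem rieszPotential_treeMeasure (p : ℕ) (w : ι → ℝ≥0∞) (φ : ι → ℝ) (s x : ℝ) :
    rieszPotential (treeMeasure p w φ) s x =
      ∑' t, truncWeight p w t * ‖x + treeFreq φ t‖ₑ ^ (-s) := by
  simp [rieszPotential, treeMeasure, lintegral_sum_measure, edist_eq_enorm_sub]

/-- The coefficients of the tree expansion of the approximate Riccati solution at `η`: the tree `t`
with fewer than `p` nodes contributes the product of its `c k` over the product of the small
denominators `2η(2η + treeFreq φ s)` of its subtrees `s`, and larger trees contribute nothing. -/
noncomputable def truncCoeff (p : ℕ) (c : ι → ℂ) (φ : ι → ℝ) (η : ℝ) (t : BinaryTree ι) : ℂ :=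
  if t.numNodes < p then ((treeLabels t).map c).prod *
    ((treeSubtrees t).map fun s => (2 * η * (2 * η + treeFreq φ s) : ℂ)⁻¹).prod else 0

/-- The part of the quadratic term of the Riccati equation that the truncation at `p` discards. -/
noncomputable def truncTail (p : ℕ) (c : ι → ℂ) (φ : ι → ℝ) (η : ℝ)
    (q : ι × BinaryTree ι × BinaryTree ι) : ℂ :=
  if (BinaryTree.node q.1 q.2.1 q.2.2).numNodes < p then 0 else
    c q.1 * (truncCoeff p c φ η q.2.1 * truncCoeff p c φ η q.2.2)

variable {p : ℕ} {c : ι → ℂ} {φ : ι → ℝ} {η : ℝ}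

theorem truncCoeff_mul (c f : ι → ℂ) (t : BinaryTree ι) :
    truncCoeff p (fun k => c k * f k) φ η t =
      truncCoeff p c φ η t * ((treeLabels t).map f).prod := by
  simp only [truncCoeff, Multiset.prod_map_mul]
  split_ifs <;> ring

theorem truncCoeff_nil (hp : p ≠ 0) : truncCoeff p c φ η .nil = 1 := by
  simp [truncCoeff, treeLabels, treeSubtrees, Nat.pos_of_ne_zero hp]

theorem norm_truncTail_le (q : ι × BinaryTree ι × BinaryTree ι) :
    ‖truncTail p c φ η q‖ ≤
      ‖c q.1 * (truncCoeff p c φ η q.2.1 * truncCoeff p c φ η q.2.2)‖ := by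
  unfold truncTail
  split_ifs
  exacts [norm_zero.trans_le (norm_nonneg _), le_rfl]

theorem summable_norm_truncTail (hc : Summable fun k => ‖c k‖)
    (ha : Summable fun t => ‖truncCoeff p c φ η t‖) : Summable fun q => ‖truncTail p c φ η q‖ :=
  summable_norm_iff.2 (Summable.of_norm_bounded
    (summable_norm_iff.2 (hasSum_triple_mul hc ha ha).summable) norm_truncTail_le)

theorem truncTail_mul (c f : ι → ℂ) (q : ι × BinaryTree ι × BinaryTree ι) :
    truncTail p (fun k => c k * f k) φ η q =
      truncTail p c φ η q * ((treeLabels (.node q.1 q.2.1 q.2.2)).map f).prod := by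
  simp only [truncTail, truncCoeff_mul, treeLabels, Multiset.map_cons, Multiset.map_add,
    Multiset.prod_cons, Multiset.prod_add]
  split_ifs <;> ring

theorem truncCoeff_node_mul (hne : ∀ t, 2 * η + treeFreq φ t ≠ 0) (k : ι) (l r : BinaryTree ι) :
    (2 * η + treeFreq φ (.node k l r)) * truncCoeff p c φ η (.node k l r) = (2 * η : ℂ)⁻¹ *
      (c k * (truncCoeff p c φ η l * truncCoeff p c φ η r) - truncTail p c φ η (k, l, r)) := by
  by_cases h : (BinaryTree.node k l r).numNodes < p
  · have hlr : l.numNodes < p ∧ r.numNodes < p := by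
      simp only [BinaryTree.numNodes] at h
      omega
    have hden : (2 * η + treeFreq φ (.node k l r) : ℂ) ≠ 0 := mod_cast hne (.node k l r)
    simp only [truncCoeff, truncTail, h, hlr, if_true, treeLabels, treeSubtrees, Multiset.map_cons,
      Multiset.map_add, Multiset.prod_cons, Multiset.prod_add, sub_zero]
    rw [mul_inv]
    field_simp
  · rw [truncCoeff, truncTail, if_neg h, if_neg h, sub_self, mul_zero, mul_zero]

theorem enorm_truncCoeff_rpow_le {α : ℝ} (hα : 0 < α) (t : BinaryTree ι) :
    ‖truncCoeff p c φ η t‖ₑ ^ α ≤ truncWeight p (fun k => ‖c k‖ₑ ^ α) t *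
      (1 + ((treeSubtrees t).map fun s =>
        ‖(2 * η * (2 * η + treeFreq φ s) : ℂ)⁻¹‖ₑ ^ (((p : ℝ) - 1) * α)).sum) := by
  by_cases ht : t.numNodes < p
  · rw [truncCoeff, truncWeight, if_pos ht, if_pos ht, enorm_mul,
      ENNReal.mul_rpow_of_nonneg _ _ hα.le, enorm_multiset_map_prod_rpow _ _ hα.le,
      enorm_multiset_map_prod_rpow _ _ hα.le]
    gcongr
    refine (multiset_prod_le_one_add_sum_pow (q := p - 1) ?_).trans_eq ?_
    · simpa using Nat.le_sub_one_of_lt ht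
    · simp only [Multiset.map_map, Function.comp_def, ← ENNReal.rpow_natCast, ← ENNReal.rpow_mul,
        Nat.cast_pred (Nat.zero_lt_of_lt ht), mul_comm α]
  · rw [truncCoeff, if_neg ht, enorm_zero]
    simp only [ENNReal.zero_rpow_of_pos hα, zero_le]

theorem enorm_two_mul_mul_inv_rpow_le {s : ℝ} (hs : 0 ≤ s) (η ω : ℝ) :
    ‖(2 * η * (2 * η + ω) : ℂ)⁻¹‖ₑ ^ s ≤ ‖2 * η‖ₑ ^ (-s) * ‖2 * η + ω‖ₑ ^ (-s) := by
  have hinv (x : ℝ) : ‖(x : ℂ)⁻¹‖ₑ ≤ ‖x‖ₑ⁻¹ := by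
    rw [← Complex.ofReal_inv, enorm_eq_nnnorm, Complex.nnnorm_real, ← enorm_eq_nnnorm]
    rcases eq_or_ne x 0 with rfl | hx
    · simp
    · exact (enorm_inv hx).le
  calc ‖(2 * η * (2 * η + ω) : ℂ)⁻¹‖ₑ ^ s
      = (‖((2 * η : ℝ) : ℂ)⁻¹‖ₑ * ‖((2 * η + ω : ℝ) : ℂ)⁻¹‖ₑ) ^ s := by
        push_cast
        rw [mul_inv, enorm_mul]
    _ ≤ (‖2 * η‖ₑ⁻¹ * ‖2 * η + ω‖ₑ⁻¹) ^ s := by gcongr <;> exact hinv _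
    _ = _ := by
        simp only [ENNReal.mul_rpow_of_nonneg _ _ hs, ENNReal.inv_rpow, ← ENNReal.rpow_neg]

theorem tsum_enorm_truncCoeff_ne_top (hp : p ≠ 0) {α : ℝ} (hα0 : 0 < α) (hα1 : α ≤ 1)
    (hc : ∑' k, ‖c k‖ₑ ^ α ≠ ⊤) (hη : η ≠ 0)
    (hpot : rieszPotential (treeMeasure p (fun k => ‖c k‖ₑ ^ α) φ)
      (((p : ℝ) - 1) * α) (2 * η) ≠ ⊤) :
    ∑' t, ‖truncCoeff p c φ η t‖ₑ ≠ ⊤ := by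
  have hs : 0 ≤ ((p : ℝ) - 1) * α :=
    mul_nonneg (sub_nonneg.2 (Nat.one_le_cast.2 (Nat.one_le_iff_ne_zero.2 hp))) hα0.le
  have hden : ∑' t, truncWeight p (fun k => ‖c k‖ₑ ^ α) t *
      ‖(2 * η * (2 * η + treeFreq φ t) : ℂ)⁻¹‖ₑ ^ (((p : ℝ) - 1) * α) ≠ ⊤ := by
    rw [rieszPotential_treeMeasure] at hpot
    have htwo : ‖2 * η‖ₑ ^ (-(((p : ℝ) - 1) * α)) ≠ ⊤ :=
      ENNReal.rpow_ne_top_of_ne_zero (by simpa) enorm_ne_top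
    refine ne_top_of_le_ne_top (ENNReal.mul_ne_top htwo hpot) ((ENNReal.tsum_le_tsum fun t =>
      mul_le_mul_right (enorm_two_mul_mul_inv_rpow_le hs η (treeFreq φ t)) _).trans_eq ?_)
    simp_rw [mul_left_comm, ENNReal.tsum_mul_left]
  refine tsum_ne_top_of_tsum_rpow_ne_top hα0 hα1 (ne_top_of_le_ne_top ?_
    (ENNReal.tsum_le_tsum fun t => enorm_truncCoeff_rpow_le hα0 t))
  simp_rw [mul_one_add (truncWeight p _ _), ENNReal.tsum_add]
  exact ENNReal.add_ne_top.2 ⟨tsum_truncWeight_ne_top hc p,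
    tsum_truncWeight_mul_sum_treeSubtrees_ne_top hc hden le_rfl⟩

theorem hasSum_freq_mul_truncCoeff (hp : p ≠ 0) (hne : ∀ t, 2 * η + treeFreq φ t ≠ 0)
    (hc : Summable fun k => ‖c k‖) (ha : Summable fun t => ‖truncCoeff p c φ η t‖) :
    HasSum (fun t => (2 * η + treeFreq φ t) * truncCoeff p c φ η t)
      (2 * η + (2 * η : ℂ)⁻¹ *
        ((∑' k, c k) * (∑' t, truncCoeff p c φ η t) ^ 2 - ∑' q, truncTail p c φ η q)) := by
  have hall := hasSum_triple_mul hc ha ha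
  have hnode : HasSum (fun q : ι × BinaryTree ι × BinaryTree ι =>
      (2 * η + treeFreq φ (.node q.1 q.2.1 q.2.2)) * truncCoeff p c φ η (.node q.1 q.2.1 q.2.2))
      ((2 * η : ℂ)⁻¹ *
        ((∑' k, c k) * (∑' t, truncCoeff p c φ η t) ^ 2 - ∑' q, truncTail p c φ η q)) := by
    simp only [sq, truncCoeff_node_mul hne]
    exact (hall.sub (summable_norm_truncTail hc ha).of_norm.hasSum).mul_left _
  simpa [truncCoeff_nil hp, treeFreq, treeLabels] using hasSum_binaryTree
    (f := fun t => (2 * η + treeFreq φ t) * truncCoeff p c φ η t) hnode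

theorem summable_norm_freq_mul_truncCoeff (hp : p ≠ 0) (hne : ∀ t, 2 * η + treeFreq φ t ≠ 0)
    (hc : Summable fun k => ‖c k‖) (ha : Summable fun t => ‖truncCoeff p c φ η t‖) :
    Summable fun t => ‖treeFreq φ t * truncCoeff p c φ η t‖ := by
  refine summable_norm_iff.2 (((hasSum_freq_mul_truncCoeff hp hne hc ha).summable.sub
    (ha.of_norm.mul_left (2 * η : ℂ))).congr fun t => ?_)
  ring

theorem tsum_freq_mul_truncCoeff (hp : p ≠ 0) (hne : ∀ t, 2 * η + treeFreq φ t ≠ 0)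
    (hc : Summable fun k => ‖c k‖) (ha : Summable fun t => ‖truncCoeff p c φ η t‖) :
    ∑' t, treeFreq φ t * truncCoeff p c φ η t = 2 * η * (1 - ∑' t, truncCoeff p c φ η t) +
      (2 * η : ℂ)⁻¹ *
        ((∑' k, c k) * (∑' t, truncCoeff p c φ η t) ^ 2 - ∑' q, truncTail p c φ η q) := by
  have hsum := (hasSum_freq_mul_truncCoeff hp hne hc ha).tsum_eq
  simp only [add_mul] at hsum
  rw [Summable.tsum_add (ha.of_norm.mul_left _)
    (summable_norm_freq_mul_truncCoeff hp hne hc ha).of_norm, tsum_mul_left] at hsum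
  linear_combination hsum

end TreeCoefficients

section Modulated

theorem norm_exp_neg_I_mul_mul (a x : ℝ) : ‖Complex.exp (-Complex.I * a * x)‖ = 1 := by
  simp [Complex.norm_exp]

theorem enorm_exp_neg_I_mul_mul (a x : ℝ) : ‖Complex.exp (-Complex.I * a * x)‖ₑ = 1 := by
  rw [← ofReal_norm, norm_exp_neg_I_mul_mul, ENNReal.ofReal_one]

/-- The derivative of `h` with the oscillation `exp (-iωx)` removed: it equals
`exp (-iωx)` times the derivative of `exp (iωx) h x`. -/
noncomputable def demodDeriv (ω : ℝ) (h : ℝ → ℂ) (x : ℝ) : ℂ :=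
  deriv h x + Complex.I * ω * h x

/-- `h` oscillates with frequency `ω` and a slowly varying amplitude: `h` is continuously
differentiable and bounded by `C`, and its demodulated derivative is bounded by `D` and has
`L¹` norm at most `D` on the half-line. The pointwise bounds are imposed on all of `ℝ`. -/
structure IsModulated (ω : ℝ) (C D : ℝ≥0) (h : ℝ → ℂ) : Prop where
  contDiff : ContDiff ℝ 1 h
  nnnorm_le (x : ℝ) : ‖h x‖₊ ≤ C
  nnnorm_demodDeriv_le (x : ℝ) : ‖demodDeriv ω h x‖₊ ≤ D
  lintegral_demodDeriv_le : ∫⁻ x in Ioi 0, ‖demodDeriv ω h x‖ₑ ≤ D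

namespace IsModulated

variable {ω ω₁ ω₂ : ℝ} {C C₁ C₂ D D₁ D₂ : ℝ≥0} {h h₁ h₂ : ℝ → ℂ}

theorem differentiable (hh : IsModulated ω C D h) : Differentiable ℝ h :=
  hh.contDiff.differentiable one_ne_zero

theorem continuous_demodDeriv (hh : IsModulated ω C D h) : Continuous (demodDeriv ω h) :=
  (hh.contDiff.continuous_deriv le_rfl).add (continuous_const.mul hh.contDiff.continuous)

theorem mono (hh : IsModulated ω C₁ D₁ h) (hC : C₁ ≤ C₂) (hD : D₁ ≤ D₂) :
    IsModulated ω C₂ D₂ h :=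
  ⟨hh.contDiff, fun x => (hh.nnnorm_le x).trans hC, fun x => (hh.nnnorm_demodDeriv_le x).trans hD,
    hh.lintegral_demodDeriv_le.trans (ENNReal.coe_le_coe.2 hD)⟩

theorem exp (ω : ℝ) : IsModulated ω 1 0 fun x => Complex.exp (-Complex.I * ω * x) := by
  have hdemod (x : ℝ) : demodDeriv ω (fun x : ℝ => Complex.exp (-Complex.I * ω * x)) x = 0 := by
    have hlin : HasDerivAt (fun x : ℝ => -Complex.I * ω * (x : ℂ)) (-Complex.I * ω * 1) x :=
      Complex.ofRealCLM.hasDerivAt.const_mul _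
    rw [demodDeriv, hlin.cexp.deriv]
    ring
  refine ⟨?_, fun x => ?_, fun x => ?_, ?_⟩
  · exact (contDiff_const.mul Complex.ofRealCLM.contDiff).cexp
  · rw [← NNReal.coe_le_coe, coe_nnnorm, norm_exp_neg_I_mul_mul, NNReal.coe_one]
  · simp only [hdemod, nnnorm_zero, le_refl]
  · simp only [hdemod, enorm_zero, lintegral_zero, zero_le]

theorem one : IsModulated 0 1 0 fun _ => 1 := by
  simpa using exp 0

theorem mul (hh₁ : IsModulated ω₁ C₁ D₁ h₁) (hh₂ : IsModulated ω₂ C₂ D₂ h₂) :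
    IsModulated (ω₁ + ω₂) (C₁ * C₂) (C₁ * D₂ + D₁ * C₂) fun x => h₁ x * h₂ x := by
  have hdemod (x : ℝ) : demodDeriv (ω₁ + ω₂) (fun x => h₁ x * h₂ x) x =
      h₁ x * demodDeriv ω₂ h₂ x + demodDeriv ω₁ h₁ x * h₂ x := by
    simp only [demodDeriv, deriv_fun_mul (hh₁.differentiable x) (hh₂.differentiable x)]
    push_cast
    ring
  refine ⟨hh₁.contDiff.mul hh₂.contDiff, fun x => ?_, fun x => ?_, ?_⟩
  · rw [nnnorm_mul]
    gcongr
    exacts [hh₁.nnnorm_le x, hh₂.nnnorm_le x]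
  · rw [hdemod]
    refine (nnnorm_add_le _ _).trans ?_
    rw [nnnorm_mul, nnnorm_mul]
    gcongr
    exacts [hh₁.nnnorm_le x, hh₂.nnnorm_demodDeriv_le x, hh₁.nnnorm_demodDeriv_le x,
      hh₂.nnnorm_le x]
  · have hpt (x : ℝ) : ‖demodDeriv (ω₁ + ω₂) (fun x => h₁ x * h₂ x) x‖ₑ ≤
        C₁ * ‖demodDeriv ω₂ h₂ x‖ₑ + ‖demodDeriv ω₁ h₁ x‖ₑ * C₂ := by
      rw [hdemod]
      refine (enorm_add_le _ _).trans ?_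
      rw [enorm_mul, enorm_mul]
      gcongr
      exacts [enorm_le_coe.2 (hh₁.nnnorm_le x), enorm_le_coe.2 (hh₂.nnnorm_le x)]
    refine (lintegral_mono hpt).trans ?_
    rw [lintegral_add_left (hh₂.continuous_demodDeriv.enorm.measurable.const_mul _),
      lintegral_const_mul' _ _ ENNReal.coe_ne_top, lintegral_mul_const' _ _ ENNReal.coe_ne_top]
    push_cast
    gcongr
    exacts [hh₂.lintegral_demodDeriv_le, hh₁.lintegral_demodDeriv_le]

theorem const_mul (a : ℂ) (hh : IsModulated ω C D h) :
    IsModulated ω (‖a‖₊ * C) (‖a‖₊ * D) fun x => a * h x := by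
  have hdemod (x : ℝ) : demodDeriv ω (fun x => a * h x) x = a * demodDeriv ω h x := by
    simp only [demodDeriv, deriv_const_mul a (hh.differentiable x)]
    ring
  refine ⟨contDiff_const.mul hh.contDiff, fun x => ?_, fun x => ?_, ?_⟩
  · rw [nnnorm_mul]
    gcongr
    exact hh.nnnorm_le x
  · rw [hdemod, nnnorm_mul]
    gcongr
    exact hh.nnnorm_demodDeriv_le x
  · simp only [hdemod, enorm_mul]
    rw [lintegral_const_mul' _ _ enorm_ne_top, ENNReal.coe_mul]
    gcongr
    exacts [le_rfl, hh.lintegral_demodDeriv_le]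

theorem multiset_prod {ι : Type*} {B : ℝ≥0} {f : ι → ℝ → ℂ} {φ : ι → ℝ}
    (hf : ∀ k, IsModulated (φ k) B B (f k)) (m : Multiset ι) :
    IsModulated (m.map φ).sum (B ^ m.card) (m.card * B ^ m.card)
      fun x => (m.map (f · x)).prod := by
  induction m using Multiset.induction with
  | empty => simpa using one
  | cons k m ih =>
    convert (hf k).mul ih using 1
    · simp
    · simp [pow_succ']
    · simp only [Multiset.card_cons]
      push_cast
      ring
    · simp

end IsModulated

theorem lintegral_multiset_prod_le {ι X : Type*} [MeasurableSpace X] {μ : Measure X} {p : ℕ}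
    (hp : p ≠ 0) {B : ℝ≥0} {f : ι → X → ℂ} (hf : ∀ k, AEMeasurable (f k) μ)
    (hB : ∀ k x, ‖f k x‖₊ ≤ B) (hL : ∀ k, ∫⁻ x, ‖f k x‖ₑ ^ p ∂μ ≤ B) {m : Multiset ι}
    (hm : p ≤ m.card) :
    ∫⁻ x, ‖(m.map (f · x)).prod‖ₑ ∂μ ≤ B ^ (m.card - p) * (m.card * B) := by
  have hpt (x : X) : ‖(m.map (f · x)).prod‖ₑ ≤
      B ^ (m.card - p) * (m.map fun k => ‖f k x‖ₑ ^ p).sum := by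
    have hprod : ‖(m.map (f · x)).prod‖ₑ = (m.map fun k => ‖f k x‖ₑ).prod := by
      simpa only [ENNReal.rpow_one] using enorm_multiset_map_prod_rpow m (f · x) zero_le_one
    rw [hprod]
    simpa only [Multiset.card_map, Multiset.map_map, Function.comp_def] using
      multiset_prod_le_pow_mul_sum_pow hp (m := m.map fun k => ‖f k x‖ₑ) (b := B)
        (by simpa using hm) (by simpa using fun k _ => enorm_le_coe.2 (hB k x))
  have hsum (m : Multiset ι) : ∫⁻ x, (m.map fun k => ‖f k x‖ₑ ^ p).sum ∂μ ≤ m.card * B := by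
    induction m using Multiset.induction with
    | empty => simp
    | cons k m ih =>
      simp only [Multiset.map_cons, Multiset.sum_cons, Multiset.card_cons]
      rw [lintegral_add_left' ((hf k).enorm.pow_const p)]
      push_cast
      rw [add_comm, add_one_mul]
      exact add_le_add ih (hL k)
  refine (lintegral_mono hpt).trans ?_
  rw [lintegral_const_mul' _ _ (by finiteness)]
  gcongr
  exact hsum m

end Modulated

section BoundedVariation

theorem setLIntegral_shift_Ioc (W : ℝ → ℝ≥0∞) (a b L : ℝ) :
    ∫⁻ x in Ioc a b, W (x + L) = ∫⁻ x in Ioc (a + L) (b + L), W x := by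
  simpa using (measurePreserving_add_right (volume : Measure ℝ) L).setLIntegral_comp_preimage_emb
    (MeasurableEquiv.addRight L).measurableEmbedding W (Ioc (a + L) (b + L))

theorem lintegral_le_of_monotone_add_le {W v : ℝ → ℝ≥0∞} {M : ℝ≥0∞} {L : ℝ} (hL : 0 ≤ L)
    (hW : Monotone W) (hM : M ≠ ⊤) (hWM : ∀ x, W x ≤ M)
    (hv : ∀ x, 0 < x → W x + v x ≤ W (x + L)) :
    ∫⁻ x in Ioi 0, v x ≤ ENNReal.ofReal L * M := by
  have hN (N : ℕ) : ∫⁻ x in Ioc (0 : ℝ) N, v x ≤ ENNReal.ofReal L * M := by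
    have hfin : ∫⁻ x in Ioc (0 : ℝ) N, W x ≠ ⊤ :=
      ne_top_of_le_ne_top (by simp [ENNReal.mul_ne_top, hM]) (lintegral_mono hWM)
    refine (ENNReal.add_le_add_iff_left hfin).1 ?_
    calc (∫⁻ x in Ioc (0 : ℝ) N, W x) + ∫⁻ x in Ioc (0 : ℝ) N, v x
        ≤ ∫⁻ x in Ioc (0 : ℝ) N, W (x + L) := by
          rw [← lintegral_add_left hW.measurable]
          exact setLIntegral_mono' measurableSet_Ioc fun x hx => hv x hx.1
      _ ≤ ∫⁻ x in Ioc (0 : ℝ) N ∪ Ioc (N : ℝ) (N + L), W x := by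
          rw [setLIntegral_shift_Ioc, Ioc_union_Ioc_eq_Ioc N.cast_nonneg (by linarith)]
          exact lintegral_mono_set (Ioc_subset_Ioc_left (by linarith))
      _ ≤ (∫⁻ x in Ioc (0 : ℝ) N, W x) + ∫⁻ x in Ioc (N : ℝ) (N + L), W x :=
          lintegral_union_le _ _ _
      _ ≤ (∫⁻ x in Ioc (0 : ℝ) N, W x) + ENNReal.ofReal L * M := by
          gcongr
          exact (lintegral_mono hWM).trans_eq (by simp [mul_comm])
  have hU : Ioi (0 : ℝ) = ⋃ N : ℕ, Ioc (0 : ℝ) N :=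
    (iUnion_Ioc_eq_Ioi_self_iff.2 fun x _ => exists_nat_ge x).symm
  rw [hU, setLIntegral_iUnion_of_directed]
  · exact iSup_le hN
  · exact Monotone.directed_le fun a b h => Ioc_subset_Ioc_right (Nat.cast_le.2 h)

theorem lintegral_eVariationOn_Icc_le {E : Type*} [PseudoEMetricSpace E] {f : ℝ → E}
    (hf : BoundedVariationOn f (Ioi 0)) {L : ℝ} (hL : 0 ≤ L) :
    ∫⁻ x in Ioi 0, eVariationOn f (Icc x (x + L)) ≤
      ENNReal.ofReal L * eVariationOn f (Ioi 0) := by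
  refine lintegral_le_of_monotone_add_le hL (W := fun x => eVariationOn f (Ioc 0 x))
    (fun x y hxy => eVariationOn.mono f (Ioc_subset_Ioc_right hxy)) hf
    (fun x => eVariationOn.mono f Ioc_subset_Ioi_self) fun x hx => ?_
  rw [← eVariationOn.union f (isGreatest_Ioc hx) (isLeast_Icc (by linarith)),
    Ioc_union_Icc_eq_Ioc hx (by linarith)]

theorem aemeasurable_restrict_of_boundedVariationOn {f : ℝ → ℂ} {s : Set ℝ}
    (hs : MeasurableSet s) (hf : BoundedVariationOn f s) : AEMeasurable f (volume.restrict s) := by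
  have hreal (g : ℝ → ℝ) (hg : BoundedVariationOn g s) : AEMeasurable g (volume.restrict s) := by
    obtain ⟨a, b, ha, hb, rfl⟩ := hg.locallyBoundedVariationOn.exists_monotoneOn_sub_monotoneOn
    exact (aemeasurable_restrict_of_monotoneOn hs ha).sub
      (aemeasurable_restrict_of_monotoneOn hs hb)
  exact aemeasurable_of_re_im (𝕜 := ℂ)
    (hreal _ (Complex.reCLM.lipschitz.comp_boundedVariationOn hf))
    (hreal _ (Complex.imCLM.lipschitz.comp_boundedVariationOn hf))

theorem enorm_le_eVariationOn_add_lintegral {E : Type*} [NormedAddCommGroup E] {p : ℕ}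
    (hp : p ≠ 0) (f : ℝ → E) {x : ℝ} (hx : 0 < x) :
    ‖f x‖ₑ ≤ eVariationOn f (Ioi 0) + 1 + ∫⁻ y in Ioi 0, ‖f y‖ₑ ^ p := by
  have hpt (y : ℝ) (hy : 0 < y) : ‖f x‖ₑ ≤ eVariationOn f (Ioi 0) + 1 + ‖f y‖ₑ ^ p := by
    have hpow : ‖f y‖ₑ ≤ 1 + ‖f y‖ₑ ^ p := by
      rcases le_total ‖f y‖ₑ 1 with h | h
      · exact h.trans le_self_add
      · exact (le_self_pow₀ h hp).trans le_add_self
    calc ‖f x‖ₑ = ‖(f x - f y) + f y‖ₑ := by rw [sub_add_cancel]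
      _ ≤ ‖f x - f y‖ₑ + ‖f y‖ₑ := enorm_add_le _ _
      _ ≤ eVariationOn f (Ioi 0) + (1 + ‖f y‖ₑ ^ p) := by
          rw [← edist_eq_enorm_sub]
          exact add_le_add (eVariationOn.edist_le f hx hy) hpow
      _ = _ := (add_assoc _ _ _).symm
  calc ‖f x‖ₑ = ∫⁻ _ in Ioc (0 : ℝ) 1, ‖f x‖ₑ := by simp
    _ ≤ ∫⁻ y in Ioc (0 : ℝ) 1, (eVariationOn f (Ioi 0) + 1 + ‖f y‖ₑ ^ p) :=
        setLIntegral_mono' measurableSet_Ioc fun y hy => hpt y hy.1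
    _ = eVariationOn f (Ioi 0) + 1 + ∫⁻ y in Ioc (0 : ℝ) 1, ‖f y‖ₑ ^ p := by
        simp [lintegral_add_left measurable_const]
    _ ≤ _ := by gcongr; exact Ioc_subset_Ioi_self

end BoundedVariation

section UnitMean

variable {E : Type*} [NormedAddCommGroup E] [NormedSpace ℝ E] {f : ℝ → E}

/-- The mean of `f` over the unit interval to the right of `x`. -/
noncomputable def unitMean (f : ℝ → E) (x : ℝ) : E :=
  ∫ y in x..(x + 1), f y

theorem unitMean_eq_sub (hf : ∀ a b, IntervalIntegrable f volume a b) :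
    unitMean f = fun x => (∫ y in 0..(x + 1), f y) - ∫ y in 0..x, f y :=
  funext fun _ => (intervalIntegral.integral_interval_sub_left (hf _ _) (hf _ _)).symm

theorem continuous_unitMean (hf : ∀ a b, IntervalIntegrable f volume a b) :
    Continuous (unitMean f) := by
  have hprim := intervalIntegral.continuous_primitive hf 0
  rw [unitMean_eq_sub hf]
  exact (hprim.comp (continuous_add_const 1)).sub hprim

variable [CompleteSpace E]

theorem hasDerivAt_unitMean (hf : Continuous f) (x : ℝ) :
    HasDerivAt (unitMean f) (f (x + 1) - f x) x := by
  have hprim (x : ℝ) : HasDerivAt (fun x => ∫ y in 0..x, f y) (f x) x :=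
    hf.integral_hasStrictDerivAt 0 x |>.hasDerivAt
  rw [unitMean_eq_sub fun a b => hf.intervalIntegrable a b]
  exact ((hprim (x + 1)).comp_add_const x 1).sub (hprim x)

theorem enorm_unitMean_sub_le {x : ℝ} {z : E} {v : ℝ≥0∞}
    (hf : IntervalIntegrable f volume x (x + 1)) (h : ∀ y ∈ Ioc x (x + 1), ‖f y - z‖ₑ ≤ v) :
    ‖unitMean f x - z‖ₑ ≤ v := by
  have hx : x ≤ x + 1 := by linarith
  have hsub : unitMean f x - z = ∫ y in Ioc x (x + 1), (f y - z) := by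
    rw [← intervalIntegral.integral_of_le hx, intervalIntegral.integral_sub hf
      intervalIntegrable_const, unitMean]
    simp
  rw [hsub]
  calc _ ≤ ∫⁻ y in Ioc x (x + 1), ‖f y - z‖ₑ := enorm_integral_le_lintegral_enorm _
    _ ≤ ∫⁻ _ in Ioc x (x + 1), v := setLIntegral_mono' measurableSet_Ioc h
    _ = v := by simp

theorem nnnorm_unitMean_le {x : ℝ} {K : ℝ≥0} (hf : IntervalIntegrable f volume x (x + 1))
    (h : ∀ y ∈ Ioc x (x + 1), ‖f y‖₊ ≤ K) : ‖unitMean f x‖₊ ≤ K := by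
  simpa using enorm_unitMean_sub_le (z := 0) (v := K) hf (by simpa using h)

end UnitMean

section Smoothing

/-- The twofold unit mean of the extension by zero of `f` from the half-line to the line. One mean
makes a function of bounded variation continuous, the second continuously differentiable. -/
noncomputable def smoothing (f : ℝ → ℂ) : ℝ → ℂ :=
  unitMean (unitMean ((Ioi 0).indicator f))

variable {f : ℝ → ℂ} {K : ℝ≥0}

theorem nnnorm_indicator_Ioi_le (hK : ∀ x ∈ Ioi (0 : ℝ), ‖f x‖₊ ≤ K) (x : ℝ) :
    ‖(Ioi (0 : ℝ)).indicator f x‖₊ ≤ K := by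
  by_cases hx : x ∈ Ioi (0 : ℝ)
  · rw [indicator_of_mem hx]
    exact hK x hx
  · rw [indicator_of_notMem hx, nnnorm_zero]
    exact zero_le

theorem intervalIntegrable_indicator_Ioi (hf : BoundedVariationOn f (Ioi 0))
    (hK : ∀ x ∈ Ioi (0 : ℝ), ‖f x‖₊ ≤ K) (a b : ℝ) :
    IntervalIntegrable ((Ioi (0 : ℝ)).indicator f) volume a b := by
  have hmeas : AEMeasurable ((Ioi (0 : ℝ)).indicator f) :=
    (aemeasurable_indicator_iff measurableSet_Ioi).2
      (aemeasurable_restrict_of_boundedVariationOn measurableSet_Ioi hf)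
  exact (intervalIntegrable_const (c := (K : ℝ))).mono_fun'
    hmeas.aestronglyMeasurable.restrict (.of_forall (nnnorm_indicator_Ioi_le hK))

theorem nnnorm_unitMean_indicator_Ioi_le (hf : BoundedVariationOn f (Ioi 0))
    (hK : ∀ x ∈ Ioi (0 : ℝ), ‖f x‖₊ ≤ K) (x : ℝ) :
    ‖unitMean ((Ioi (0 : ℝ)).indicator f) x‖₊ ≤ K :=
  nnnorm_unitMean_le (intervalIntegrable_indicator_Ioi hf hK x (x + 1))
    fun y _ => nnnorm_indicator_Ioi_le hK y

theorem enorm_unitMean_indicator_Ioi_sub_le (hf : BoundedVariationOn f (Ioi 0))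
    (hK : ∀ x ∈ Ioi (0 : ℝ), ‖f x‖₊ ≤ K) {x y : ℝ} (hx : 0 < x) (hy : y ∈ Icc x (x + 1)) :
    ‖unitMean ((Ioi (0 : ℝ)).indicator f) y - f x‖ₑ ≤ eVariationOn f (Icc x (x + 2)) := by
  refine enorm_unitMean_sub_le (intervalIntegrable_indicator_Ioi hf hK _ _) fun z hz => ?_
  have hxz : x ≤ z := hy.1.trans hz.1.le
  rw [indicator_of_mem (mem_Ioi.2 (hx.trans_le hxz)), ← edist_eq_enorm_sub]
  exact eVariationOn.edist_le f ⟨hxz, by linarith [hz.2, hy.2]⟩ ⟨le_rfl, by linarith⟩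

theorem continuous_unitMean_indicator_Ioi (hf : BoundedVariationOn f (Ioi 0))
    (hK : ∀ x ∈ Ioi (0 : ℝ), ‖f x‖₊ ≤ K) :
    Continuous (unitMean ((Ioi (0 : ℝ)).indicator f)) :=
  continuous_unitMean (intervalIntegrable_indicator_Ioi hf hK)

theorem hasDerivAt_smoothing (hf : BoundedVariationOn f (Ioi 0))
    (hK : ∀ x ∈ Ioi (0 : ℝ), ‖f x‖₊ ≤ K) (x : ℝ) :
    HasDerivAt (smoothing f) (unitMean ((Ioi (0 : ℝ)).indicator f) (x + 1) -
      unitMean ((Ioi (0 : ℝ)).indicator f) x) x :=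
  hasDerivAt_unitMean (continuous_unitMean_indicator_Ioi hf hK) x

theorem nnnorm_smoothing_le (hf : BoundedVariationOn f (Ioi 0))
    (hK : ∀ x ∈ Ioi (0 : ℝ), ‖f x‖₊ ≤ K) (x : ℝ) : ‖smoothing f x‖₊ ≤ K :=
  nnnorm_unitMean_le ((continuous_unitMean_indicator_Ioi hf hK).intervalIntegrable x (x + 1))
    fun y _ => nnnorm_unitMean_indicator_Ioi_le hf hK y

theorem lintegral_smoothing_sub_le (hf : BoundedVariationOn f (Ioi 0))
    (hK : ∀ x ∈ Ioi (0 : ℝ), ‖f x‖₊ ≤ K) :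
    ∫⁻ x in Ioi 0, ‖smoothing f x - f x‖ₑ ≤ 2 * eVariationOn f (Ioi 0) := by
  have hpt (x : ℝ) (hx : 0 < x) :
      ‖smoothing f x - f x‖ₑ ≤ eVariationOn f (Icc x (x + 2)) :=
    enorm_unitMean_sub_le ((continuous_unitMean_indicator_Ioi hf hK).intervalIntegrable _ _)
      fun y hy => enorm_unitMean_indicator_Ioi_sub_le hf hK hx ⟨hy.1.le, hy.2⟩
  exact (setLIntegral_mono' measurableSet_Ioi hpt).trans
    ((lintegral_eVariationOn_Icc_le hf zero_le_two).trans_eq (by simp))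

theorem lintegral_deriv_smoothing_le (hf : BoundedVariationOn f (Ioi 0))
    (hK : ∀ x ∈ Ioi (0 : ℝ), ‖f x‖₊ ≤ K) :
    ∫⁻ x in Ioi 0, ‖deriv (smoothing f) x‖ₑ ≤ 4 * eVariationOn f (Ioi 0) := by
  have hpt (x : ℝ) (hx : 0 < x) :
      ‖deriv (smoothing f) x‖ₑ ≤ 2 * eVariationOn f (Icc x (x + 2)) := by
    rw [(hasDerivAt_smoothing hf hK x).deriv, ← sub_sub_sub_cancel_right _ _ (f x), two_mul]
    refine enorm_sub_le.trans (add_le_add ?_ ?_) <;>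
      refine enorm_unitMean_indicator_Ioi_sub_le hf hK hx ⟨?_, ?_⟩ <;> linarith
  calc _ ≤ 2 * ∫⁻ x in Ioi 0, eVariationOn f (Icc x (x + 2)) := by
        rw [← lintegral_const_mul' _ _ ENNReal.ofNat_ne_top]
        exact setLIntegral_mono' measurableSet_Ioi hpt
    _ ≤ 2 * (ENNReal.ofReal 2 * eVariationOn f (Ioi 0)) := by
        gcongr
        exact lintegral_eVariationOn_Icc_le hf zero_le_two
    _ = _ := by rw [← mul_assoc, ENNReal.ofReal_ofNat]; norm_num

theorem isModulated_smoothing {M : ℝ≥0} (hM : eVariationOn f (Ioi 0) ≤ M)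
    (hK : ∀ x ∈ Ioi (0 : ℝ), ‖f x‖₊ ≤ K) :
    IsModulated 0 K (2 * K + 4 * M) (smoothing f) := by
  have hf : BoundedVariationOn f (Ioi 0) := ne_top_of_le_ne_top ENNReal.coe_ne_top hM
  have hderiv := hasDerivAt_smoothing hf hK
  have hcont := continuous_unitMean_indicator_Ioi hf hK
  refine ⟨contDiff_one_iff_deriv.2 ⟨fun x => (hderiv x).differentiableAt, ?_⟩,
    nnnorm_smoothing_le hf hK, fun x => ?_, ?_⟩
  · rw [funext fun x => (hderiv x).deriv]
    exact (hcont.comp (continuous_add_const 1)).sub hcont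
  · simp only [demodDeriv, Complex.ofReal_zero, mul_zero, zero_mul, add_zero, (hderiv x).deriv]
    calc _ ≤ K + K := (nnnorm_sub_le _ _).trans (add_le_add
            (nnnorm_unitMean_indicator_Ioi_le hf hK _) (nnnorm_unitMean_indicator_Ioi_le hf hK _))
      _ ≤ _ := by rw [two_mul]; exact le_self_add
  · simp only [demodDeriv, Complex.ofReal_zero, mul_zero, zero_mul, add_zero]
    refine (lintegral_deriv_smoothing_le hf hK).trans ?_
    push_cast
    exact (mul_le_mul_right hM 4).trans le_add_self

theorem enorm_pow_le_add {E : Type*} [SeminormedAddCommGroup E] {K : ℝ≥0} {a b : E}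
    (ha : ‖a‖₊ ≤ K) (hb : ‖b‖₊ ≤ K) (p : ℕ) :
    ‖a‖ₑ ^ p ≤ ‖b‖ₑ ^ p + p * K ^ (p - 1) * ‖a - b‖ₑ := by
  simp only [enorm_eq_nnnorm]
  norm_cast
  rw [← NNReal.coe_le_coe] at *
  push_cast at *
  have hmax : max |‖a‖| |‖b‖| ≤ K := by simp [ha, hb]
  calc ‖a‖ ^ p ≤ ‖b‖ ^ p + |‖a‖ ^ p - ‖b‖ ^ p| := by linarith [le_abs_self (‖a‖ ^ p - ‖b‖ ^ p)]
    _ ≤ ‖b‖ ^ p + |‖a‖ - ‖b‖| * p * max |‖a‖| |‖b‖| ^ (p - 1) := by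
        gcongr
        exact abs_pow_sub_pow_le _ _ _
    _ ≤ ‖b‖ ^ p + ‖a - b‖ * p * K ^ (p - 1) := by
        gcongr
        exact abs_norm_sub_norm_le a b
    _ = _ := by ring

theorem lintegral_smoothing_pow_le (hf : BoundedVariationOn f (Ioi 0))
    (hK : ∀ x ∈ Ioi (0 : ℝ), ‖f x‖₊ ≤ K) (p : ℕ) :
    ∫⁻ x in Ioi 0, ‖smoothing f x‖ₑ ^ p ≤ (∫⁻ x in Ioi 0, ‖f x‖ₑ ^ p) +
      p * K ^ (p - 1) * (2 * eVariationOn f (Ioi 0)) := by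
  have hmeas := aemeasurable_restrict_of_boundedVariationOn measurableSet_Ioi hf
  refine (setLIntegral_mono' measurableSet_Ioi fun x hx =>
    enorm_pow_le_add (nnnorm_smoothing_le hf hK x) (hK x hx) p).trans ?_
  rw [lintegral_add_left' (hmeas.enorm.pow_const p), lintegral_const_mul' _ _ (by finiteness)]
  gcongr
  exact lintegral_smoothing_sub_le hf hK

theorem exists_smoothing_bound {p : ℕ} (hp : p ≠ 0) (M : ℝ≥0) : ∃ B : ℝ≥0, 1 ≤ B ∧
    ∀ f : ℝ → ℂ, eVariationOn f (Ioi 0) ≤ M → ∫⁻ x in Ioi 0, ‖f x‖ₑ ^ p ≤ M →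
      (∀ x ∈ Ioi (0 : ℝ), ‖f x‖₊ ≤ B) ∧ IsModulated 0 B B (smoothing f) ∧
        (∫⁻ x in Ioi 0, ‖smoothing f x‖ₑ ^ p ≤ B) ∧
        ∫⁻ x in Ioi 0, ‖smoothing f x - f x‖ₑ ≤ B := by
  let K : ℝ≥0 := 2 * M + 1
  refine ⟨max (max K (2 * K + 4 * M)) (max (M + p * K ^ (p - 1) * (2 * M)) (2 * M)),
    le_max_of_le_left (le_max_of_le_left le_add_self), fun f hM hp' => ?_⟩
  have hf : BoundedVariationOn f (Ioi 0) := ne_top_of_le_ne_top ENNReal.coe_ne_top hM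
  have hK (x : ℝ) (hx : x ∈ Ioi (0 : ℝ)) : ‖f x‖₊ ≤ K := by
    rw [← enorm_le_coe]
    refine (enorm_le_eVariationOn_add_lintegral hp f hx).trans ((add_le_add_three hM le_rfl
      hp').trans_eq ?_)
    push_cast [K]
    ring
  refine ⟨fun x hx => (hK x hx).trans ?_, (isModulated_smoothing hM hK).mono ?_ ?_,
    (lintegral_smoothing_pow_le hf hK p).trans ?_, (lintegral_smoothing_sub_le hf hK).trans ?_⟩
  · simp
  · simp
  · simp
  · refine le_trans ?_ (ENNReal.coe_le_coe.2 (le_max_of_le_right (le_max_left _ _)))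
    push_cast
    gcongr
  · refine le_trans ?_ (ENNReal.coe_le_coe.2 (le_max_of_le_right (le_max_right _ _)))
    push_cast
    gcongr

end Smoothing

namespace IsModulated

variable {ω : ℝ} {C D : ℝ≥0} {h : ℝ → ℂ}

theorem tendsto_zero (hh : IsModulated ω C D h) {p : ℕ} (hp : p ≠ 0)
    (hL : ∫⁻ x in Ioi 0, ‖h x‖ₑ ^ p ≠ ⊤) : Tendsto h atTop (𝓝 0) := by
  let g (x : ℝ) : ℂ := h x * Complex.exp (-Complex.I * (-ω : ℝ) * x)
  have hg : IsModulated 0 C D g := by simpa [g] using hh.mul (exp (-ω))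
  have hgh (x : ℝ) : ‖g x‖ₑ = ‖h x‖ₑ := by
    rw [enorm_mul, enorm_exp_neg_I_mul_mul, mul_one]
  have hderiv (x : ℝ) : HasDerivAt g (demodDeriv 0 g x) x := by
    simpa [demodDeriv] using (hg.differentiable x).hasDerivAt
  have hint : IntegrableOn (demodDeriv 0 g) (Ioi 0) :=
    ⟨hg.continuous_demodDeriv.aestronglyMeasurable,
      hg.lintegral_demodDeriv_le.trans_lt ENNReal.coe_lt_top⟩
  have hpow : Tendsto (fun x => g x ^ p) atTop (𝓝 0) := by
    refine tendsto_zero_of_hasDerivAt_of_integrableOn_Ioi (a := 0)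
      (f' := fun x => p * g x ^ (p - 1) * demodDeriv 0 g x) (fun x _ => (hderiv x).pow p)
      (hint.bdd_mul (c := p * C ^ (p - 1)) ?_ (.of_forall fun x => ?_)) ⟨?_, ?_⟩
    · exact (continuous_const.mul (hg.contDiff.continuous.pow _)).aestronglyMeasurable
    · rw [norm_mul, norm_pow, Complex.norm_natCast]
      gcongr
      exact hg.nnnorm_le x
    · exact (hg.contDiff.continuous.pow p).aestronglyMeasurable
    · simpa only [HasFiniteIntegral, enorm_pow, hgh] using hL.lt_top
  have hroot : Tendsto (fun x => ‖g x‖) atTop (𝓝 0) := by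
    simpa [norm_pow, Real.pow_rpow_inv_natCast, hp] using
      hpow.norm.rpow_const (p := (p : ℝ)⁻¹) (.inr (by positivity))
  exact tendsto_zero_iff_norm_tendsto_zero.2
    (hroot.congr fun x => by simpa only [enorm_eq_iff_norm_eq] using hgh x)

theorem norm_deriv_le (hh : IsModulated ω C D h) (x : ℝ) : ‖deriv h x‖ ≤ D + |ω| * C := by
  have hderiv : deriv h x = demodDeriv ω h x - Complex.I * ω * h x := by simp [demodDeriv]
  rw [hderiv]
  refine (norm_sub_le _ _).trans (add_le_add (hh.nnnorm_demodDeriv_le x) ?_)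
  rw [norm_mul, norm_mul, Complex.norm_I, one_mul, Complex.norm_real, Real.norm_eq_abs]
  gcongr
  exact hh.nnnorm_le x

end IsModulated

section ModulatedSeries

theorem integrable_tsum_of_lintegral_le {ι X : Type*} [Countable ι] [MeasurableSpace X]
    {μ : Measure X} {F : ι → X → ℂ} {u : ι → ℝ≥0} (hF : ∀ i, AEMeasurable (F i) μ)
    (hu : Summable u) (hint : ∀ i, ∫⁻ x, ‖F i x‖ₑ ∂μ ≤ u i) :
    Integrable (fun x => ∑' i, F i x) μ := by
  refine ⟨(AEMeasurable.tsum hF).aestronglyMeasurable, ?_⟩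
  calc ∫⁻ x, ‖∑' i, F i x‖ₑ ∂μ ≤ ∫⁻ x, ∑' i, ‖F i x‖ₑ ∂μ :=
        lintegral_mono fun x => enorm_tsum_le_tsum_enorm
    _ = ∑' i, ∫⁻ x, ‖F i x‖ₑ ∂μ := lintegral_tsum fun i => (hF i).enorm
    _ ≤ ∑' i, (u i : ℝ≥0∞) := ENNReal.tsum_le_tsum hint
    _ < ⊤ := (ENNReal.tsum_coe_ne_top_iff_summable.2 hu).lt_top

variable {ι : Type*} {ω : ι → ℝ} {u : ι → ℝ≥0} {T : ι → ℝ → ℂ}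

theorem hasDerivAt_tsum_of_isModulated (hT : ∀ i, IsModulated (ω i) (u i) (u i) (T i))
    (hu : Summable u) (hωu : Summable fun i => |ω i| * u i) (x : ℝ) :
    HasDerivAt (fun x => ∑' i, T i x) (∑' i, deriv (T i) x) x :=
  hasDerivAt_tsum ((NNReal.summable_coe.2 hu).add hωu)
    (fun i x => ((hT i).differentiable x).hasDerivAt) (fun i x => (hT i).norm_deriv_le x)
    (.of_norm_bounded (NNReal.summable_coe.2 hu) fun i => (hT i).nnnorm_le 0) x

theorem contDiff_tsum_of_isModulated (hT : ∀ i, IsModulated (ω i) (u i) (u i) (T i))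
    (hu : Summable u) (hωu : Summable fun i => |ω i| * u i) :
    ContDiff ℝ 1 fun x => ∑' i, T i x := by
  have hderiv := hasDerivAt_tsum_of_isModulated hT hu hωu
  refine contDiff_one_iff_deriv.2 ⟨fun x => (hderiv x).differentiableAt, ?_⟩
  rw [funext fun x => (hderiv x).deriv]
  exact continuous_tsum (fun i => (hT i).contDiff.continuous_deriv le_rfl)
    ((NNReal.summable_coe.2 hu).add hωu) fun i x => (hT i).norm_deriv_le x

theorem deriv_tsum_of_isModulated (hT : ∀ i, IsModulated (ω i) (u i) (u i) (T i))
    (hu : Summable u) (hωu : Summable fun i => |ω i| * u i) (x : ℝ) :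
    deriv (fun x => ∑' i, T i x) x =
      (∑' i, demodDeriv (ω i) (T i) x) - Complex.I * ∑' i, ω i * T i x := by
  have hdemod : Summable fun i => demodDeriv (ω i) (T i) x :=
    .of_norm_bounded (NNReal.summable_coe.2 hu) fun i => (hT i).nnnorm_demodDeriv_le x
  have hfreq : Summable fun i => ω i * T i x := .of_norm_bounded hωu fun i => by
    rw [norm_mul, Complex.norm_real, Real.norm_eq_abs]
    gcongr
    exact (hT i).nnnorm_le x
  rw [(hasDerivAt_tsum_of_isModulated hT hu hωu x).deriv, ← tsum_mul_left,
    ← hdemod.tsum_sub (hfreq.mul_left _)]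
  exact tsum_congr fun i => by simp only [demodDeriv]; ring

end ModulatedSeries

section ApproximateRiccati

/-- `A` solves, up to an integrable error, the Riccati equation
`A' = 2iη (A - 1) + W A² / (2iη)` and tends to `1` at infinity. With `W` a potential, this is the
equation `m' + m² = W - η²` for the logarithmic derivative `m = iη (A - 2) / A`. -/
structure IsApproxRiccati (η : ℝ) (W A : ℝ → ℂ) : Prop where
  contDiff : ContDiff ℝ 1 A
  exists_norm_le : ∃ C, ∀ x, ‖A x‖ ≤ C
  tendsto : Tendsto A atTop (𝓝 1)
  integrableOn : IntegrableOn (fun x => deriv A x -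
    (2 * Complex.I * η * (A x - 1) + W x / (2 * Complex.I * η) * A x ^ 2)) (Ioi 0)

theorem IsApproxRiccati.congr_potential {η : ℝ} {V W A : ℝ → ℂ} (hA : IsApproxRiccati η W A)
    (hVW : IntegrableOn (fun x => V x - W x) (Ioi 0)) : IsApproxRiccati η V A := by
  obtain ⟨C, hC⟩ := hA.exists_norm_le
  refine ⟨hA.contDiff, ⟨C, hC⟩, hA.tendsto, ?_⟩
  have hA2 : IntegrableOn (fun x => A x ^ 2 * (V x - W x)) (Ioi 0) :=
    hVW.bdd_mul (c := C ^ 2) (hA.contDiff.continuous.pow 2).aestronglyMeasurable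
      (.of_forall fun x => by rw [norm_pow]; exact pow_le_pow_left₀ (norm_nonneg _) (hC x) 2)
  refine (hA.integrableOn.sub (hA2.const_mul (2 * Complex.I * η)⁻¹)).congr (.of_forall fun x => ?_)
  simp only [Pi.sub_apply, div_eq_mul_inv]
  ring

variable {ι : Type*} {p : ℕ} {c : ι → ℂ} {φ : ι → ℝ} {η : ℝ} {B : ℝ≥0} {f : ι → ℝ → ℂ}

theorem isModulated_truncCoeff_mul_prod (hB : 1 ≤ B) (hf : ∀ k, IsModulated (φ k) B B (f k))
    (t : BinaryTree ι) :
    IsModulated (treeFreq φ t) (‖truncCoeff p c φ η t‖₊ * (p * B ^ p))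
      (‖truncCoeff p c φ η t‖₊ * (p * B ^ p))
      fun x => truncCoeff p c φ η t * ((treeLabels t).map (f · x)).prod := by
  have hprod := (IsModulated.multiset_prod hf (treeLabels t)).const_mul (truncCoeff p c φ η t)
  rw [card_treeLabels] at hprod
  by_cases ht : t.numNodes < p
  · have hpow : B ^ t.numNodes ≤ B ^ p := pow_le_pow_right₀ hB ht.le
    have hp : (1 : ℝ≥0) ≤ p := Nat.one_le_cast.2 (Nat.one_le_of_lt ht)
    refine hprod.mono ?_ ?_ <;> gcongr
    exact hpow.trans (le_mul_of_one_le_left zero_le hp)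
  · simpa [truncCoeff, treeFreq, ht] using hprod

theorem card_treeLabels_of_truncTail_ne_zero {q : ι × BinaryTree ι × BinaryTree ι}
    (hq : truncTail p c φ η q ≠ 0) :
    p ≤ (treeLabels (.node q.1 q.2.1 q.2.2)).card ∧
      (treeLabels (.node q.1 q.2.1 q.2.2)).card + 1 ≤ 2 * p := by
  simp only [truncTail, truncCoeff, ne_eq, ite_eq_left_iff, mul_eq_zero, ite_eq_right_iff, not_or,
    not_forall, not_lt] at hq
  obtain ⟨hnode, -, ⟨hl, -⟩, hr, -⟩ := hq
  simp only [card_treeLabels, BinaryTree.numNodes] at hnode ⊢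
  omega

theorem integrableOn_tsum_truncTail_mul_prod [Countable ι] (hp : p ≠ 0) (hB : 1 ≤ B)
    (hf : ∀ k, IsModulated (φ k) B B (f k)) (hL : ∀ k, ∫⁻ x in Ioi 0, ‖f k x‖ₑ ^ p ≤ B)
    (hq : Summable fun q => ‖truncTail p c φ η q‖) :
    IntegrableOn (fun x => ∑' q, truncTail p c φ η q *
      ((treeLabels (.node q.1 q.2.1 q.2.2)).map (f · x)).prod) (Ioi 0) := by
  have hcont (k : ι) : Continuous (f k) := (hf k).contDiff.continuous
  refine integrable_tsum_of_lintegral_le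
    (u := fun q => ‖truncTail p c φ η q‖₊ * (2 * p * B ^ (2 * p)))
    (fun q => (continuous_const.mul
      (continuous_multiset_prod _ fun k _ => hcont k)).measurable.aemeasurable)
    ((NNReal.summable_coe.1 hq).mul_right _) fun q => ?_
  rcases eq_or_ne (truncTail p c φ η q) 0 with h0 | h0
  · simp [h0]
  obtain ⟨hpm, hm⟩ := card_treeLabels_of_truncTail_ne_zero h0
  simp only [enorm_mul]
  rw [lintegral_const_mul' _ _ enorm_ne_top, ENNReal.coe_mul]
  refine mul_le_mul_right ((lintegral_multiset_prod_le hp (fun k => (hcont k).aemeasurable)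
    (fun k => (hf k).nnnorm_le) hL hpm).trans ?_) _
  norm_cast
  rw [mul_left_comm, ← pow_succ]
  gcongr
  · exact Nat.le_of_succ_le hm
  · omega

theorem tendsto_tsum_truncCoeff_mul_prod (hp : p ≠ 0) (hB : 1 ≤ B)
    (hf : ∀ k, IsModulated (φ k) B B (f k)) (hf0 : ∀ k, Tendsto (f k) atTop (𝓝 0))
    (ha : Summable fun t => ‖truncCoeff p c φ η t‖) :
    Tendsto (fun x => ∑' t, truncCoeff p c φ η t * ((treeLabels t).map (f · x)).prod) atTop
      (𝓝 1) := by
  have hlim (t : BinaryTree ι) :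
      Tendsto (fun x => truncCoeff p c φ η t * ((treeLabels t).map (f · x)).prod) atTop
        (𝓝 (truncCoeff p c φ η t * ((treeLabels t).map fun _ => (0 : ℂ)).prod)) :=
    (tendsto_multiset_prod _ fun k _ => hf0 k).const_mul _
  have hsum : ∑' t, truncCoeff p c φ η t * ((treeLabels t).map fun _ => (0 : ℂ)).prod = 1 := by
    rw [tsum_eq_single .nil]
    · simp [truncCoeff_nil hp, treeLabels]
    · rintro (_ | ⟨k, l, r⟩) ht
      · exact (ht rfl).elim
      · simp [treeLabels]
  rw [← hsum]
  refine tendsto_tsum_of_dominated_convergence (ha.mul_right (p * B ^ p : ℝ)) hlim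
    (.of_forall fun x t => ?_)
  exact_mod_cast (isModulated_truncCoeff_mul_prod hB hf t).nnnorm_le x

theorem tsum_freq_mul_truncCoeff_mul_prod (hp : p ≠ 0) (hne : ∀ t, 2 * η + treeFreq φ t ≠ 0)
    (hc : Summable fun k => ‖c k‖) (ha : Summable fun t => ‖truncCoeff p c φ η t‖) (hB : 1 ≤ B)
    (hf : ∀ k, IsModulated (φ k) B B (f k)) (x : ℝ) :
    ∑' t, treeFreq φ t * (truncCoeff p c φ η t * ((treeLabels t).map (f · x)).prod) =
      2 * η * (1 - ∑' t, truncCoeff p c φ η t * ((treeLabels t).map (f · x)).prod) +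
      (2 * η : ℂ)⁻¹ * ((∑' k, c k * f k x) *
        (∑' t, truncCoeff p c φ η t * ((treeLabels t).map (f · x)).prod) ^ 2 -
        ∑' q, truncTail p c φ η q * ((treeLabels (.node q.1 q.2.1 q.2.2)).map (f · x)).prod) := by
  have hcx : Summable fun k => ‖c k * f k x‖ :=
    .of_nonneg_of_le (fun _ => norm_nonneg _) (fun k => by
      rw [norm_mul]
      gcongr
      exact (hf k).nnnorm_le x) (hc.mul_right (B : ℝ))
  have hax : Summable fun t => ‖truncCoeff p (fun k => c k * f k x) φ η t‖ := by
    simp only [truncCoeff_mul]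
    exact .of_nonneg_of_le (fun _ => norm_nonneg _)
      (fun t => (isModulated_truncCoeff_mul_prod hB hf t).nnnorm_le x)
      (ha.mul_right (p * B ^ p : ℝ))
  simpa only [truncCoeff_mul, truncTail_mul] using tsum_freq_mul_truncCoeff hp hne hcx hax

theorem isApproxRiccati_tsum_truncCoeff_mul_prod [Countable ι] (hp : p ≠ 0)
    (hne : ∀ t, 2 * η + treeFreq φ t ≠ 0) (hc : Summable fun k => ‖c k‖)
    (ha : Summable fun t => ‖truncCoeff p c φ η t‖) (hB : 1 ≤ B)
    (hf : ∀ k, IsModulated (φ k) B B (f k)) (hL : ∀ k, ∫⁻ x in Ioi 0, ‖f k x‖ₑ ^ p ≤ B) :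
    IsApproxRiccati η (fun x => ∑' k, c k * f k x)
      fun x => ∑' t, truncCoeff p c φ η t * ((treeLabels t).map (f · x)).prod := by
  let T (t : BinaryTree ι) (x : ℝ) := truncCoeff p c φ η t * ((treeLabels t).map (f · x)).prod
  let R (x : ℝ) := ∑' q, truncTail p c φ η q *
    ((treeLabels (.node q.1 q.2.1 q.2.2)).map (f · x)).prod
  let K : ℝ≥0 := p * B ^ p
  have hT (t : BinaryTree ι) := isModulated_truncCoeff_mul_prod (p := p) (c := c) (η := η) hB hf t
  have hu : Summable fun t => ‖truncCoeff p c φ η t‖₊ * K := (NNReal.summable_coe.1 ha).mul_right K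
  have hfreq : Summable fun t => |treeFreq φ t| * (‖truncCoeff p c φ η t‖₊ * K : ℝ≥0) :=
    ((summable_norm_freq_mul_truncCoeff hp hne hc ha).mul_right (K : ℝ)).congr fun t => by
      simp [mul_assoc]
  have hdemod : IntegrableOn (fun x => ∑' t, demodDeriv (treeFreq φ t) (T t) x) (Ioi 0) :=
    integrable_tsum_of_lintegral_le
      (fun t => (hT t).continuous_demodDeriv.measurable.aemeasurable) hu
      fun t => (hT t).lintegral_demodDeriv_le
  have hR : IntegrableOn R (Ioi 0) :=
    integrableOn_tsum_truncTail_mul_prod hp hB hf hL (summable_norm_truncTail hc ha)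
  refine ⟨contDiff_tsum_of_isModulated hT hu hfreq, ⟨∑' t, (‖truncCoeff p c φ η t‖₊ * K : ℝ≥0),
    fun x => tsum_of_norm_bounded (NNReal.summable_coe.2 hu).hasSum fun t => (hT t).nnnorm_le x⟩,
    tendsto_tsum_truncCoeff_mul_prod hp hB hf (fun k => (hf k).tendsto_zero hp
      (ne_top_of_le_ne_top ENNReal.coe_ne_top (hL k))) ha, ?_⟩
  refine (hdemod.add (hR.const_mul (Complex.I / (2 * η)))).congr (.of_forall fun x => ?_)
  beta_reduce
  rw [Pi.add_apply, deriv_tsum_of_isModulated hT hu hfreq x,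
    tsum_freq_mul_truncCoeff_mul_prod hp hne hc ha hB hf x]
  simp only [div_eq_mul_inv, mul_inv, Complex.inv_I, R]
  ring

end ApproximateRiccati

section RealSolution

theorem absolutelyContinuousOnInterval_congr {X : Type*} [PseudoMetricSpace X] {f g : ℝ → X}
    {a b : ℝ} (hf : AbsolutelyContinuousOnInterval f a b) (hfg : EqOn f g (uIcc a b)) :
    AbsolutelyContinuousOnInterval g a b := by
  rw [absolutelyContinuousOnInterval_iff] at hf ⊢
  intro ε hε
  obtain ⟨δ, hδ, h⟩ := hf ε hε
  refine ⟨δ, hδ, fun I hI hlen => (Finset.sum_congr rfl fun i hi => ?_).trans_lt (h I hI hlen)⟩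
  rw [hfg (hI.1 i hi).1, hfg (hI.1 i hi).2]

/-- `u` is a real solution of `u'' = q u` on `(0, ∞)` with derivative `v`, the equation for `v`
being stated in integrated form. -/
structure IsRealSolution (q u v : ℝ → ℝ) : Prop where
  hasDerivAt : ∀ x, 0 < x → HasDerivAt u (v x) x
  intervalIntegrable : ∀ a b, 0 < a → 0 < b → IntervalIntegrable (fun x => q x * u x) volume a b
  integral_eq : ∀ a b, 0 < a → 0 < b → ∫ x in a..b, q x * u x = v b - v a

theorem IsWeakSolution.isRealSolution {V : ℝ → ℝ} {E : ℝ} {u u' : ℝ → ℂ}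
    (hu : IsWeakSolution V E u u') (L : ℂ →L[ℝ] ℝ) :
    IsRealSolution (fun x => V x - E) (fun x => L (u x)) fun x => L (u' x) := by
  have hL (x : ℝ) : (V x - E) * L (u x) = L ((V x : ℂ) * u x - (E : ℂ) * u x) := by
    rw [← sub_mul, ← Complex.ofReal_sub, ← Complex.real_smul, map_smul, smul_eq_mul]
  have key (a b : ℝ) (ha : 0 < a) (hab : a ≤ b) :
      IntervalIntegrable (fun x => (V x - E) * L (u x)) volume a b ∧
        ∫ x in a..b, (V x - E) * L (u x) = L (u' b) - L (u' a) := by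
    obtain ⟨hint, heq⟩ := hu.2 a b ha hab
    simp only [hL]
    exact ⟨⟨L.integrable_comp hint.1, L.integrable_comp hint.2⟩, by
      rw [L.intervalIntegral_comp_comm hint, ← heq, map_sub]⟩
  refine ⟨fun x hx => L.hasFDerivAt.comp_hasDerivAt x (hu.1 x hx), fun a b ha hb => ?_,
    fun a b ha hb => ?_⟩ <;> rcases le_total a b with hab | hab
  · exact (key a b ha hab).1
  · exact (key b a hb hab).1.symm
  · exact (key a b ha hab).2
  · rw [intervalIntegral.integral_symm, (key b a hb hab).2, neg_sub]

namespace IsRealSolution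

variable {q u v : ℝ → ℝ} {a b : ℝ}

theorem eq_add_integral (hu : IsRealSolution q u v) (ha : 0 < a) (hb : 0 < b) :
    v b = v a + ∫ x in a..b, q x * u x := by
  rw [hu.integral_eq a b ha hb, add_sub_cancel]

theorem absolutelyContinuousOnInterval_deriv (hu : IsRealSolution q u v) (ha : 0 < a)
    (hb : 0 < b) : AbsolutelyContinuousOnInterval v a b := by
  have hint : AbsolutelyContinuousOnInterval (fun x => ∫ t in a..x, q t * u t) a b :=
    (hu.intervalIntegrable a b ha hb).absolutelyContinuousOnInterval_intervalIntegral left_mem_uIcc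
  refine absolutelyContinuousOnInterval_congr
    ((contDiffOn_const (c := v a)).absolutelyContinuousOnInterval.add hint) fun x hx => ?_
  exact (hu.eq_add_integral ha ((lt_min ha hb).trans_le hx.1)).symm

theorem absolutelyContinuousOnInterval (hu : IsRealSolution q u v) (ha : 0 < a)
    (hb : 0 < b) : AbsolutelyContinuousOnInterval u a b := by
  obtain ⟨K, hK⟩ := isCompact_uIcc.exists_bound_of_continuousOn
    (hu.absolutelyContinuousOnInterval_deriv ha hb).continuousOn
  exact ((convex_uIcc a b).lipschitzOnWith_of_nnnorm_hasDerivWithin_le (C := K.toNNReal)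
    (fun x hx => (hu.hasDerivAt x ((lt_min ha hb).trans_le hx.1)).hasDerivWithinAt)
    fun x hx => by
      rw [← NNReal.coe_le_coe, coe_nnnorm]
      exact (hK x hx).trans (Real.le_coe_toNNReal K)).absolutelyContinuousOnInterval

theorem ae_hasDerivAt_deriv (hu : IsRealSolution q u v) (ha : 0 < a) (hb : 0 < b) :
    ∀ᵐ x, x ∈ uIcc a b → HasDerivAt v (q x * u x) x := by
  have ha' : 0 < min a b / 2 := half_pos (lt_min ha hb)
  have hb' : 0 < max a b + 1 := by positivity
  filter_upwards [(hu.intervalIntegrable _ _ ha' hb').ae_hasDerivAt_integral] with x hx hxab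
  have hlt : min a b / 2 < x := by linarith [hxab.1]
  have hmem : x ∈ uIcc (min a b / 2) (max a b + 1) :=
    Icc_subset_uIcc ⟨hlt.le, hxab.2.trans (le_add_of_nonneg_right zero_le_one)⟩
  refine ((hx hmem _ left_mem_uIcc).const_add (v (min a b / 2))).congr_of_eventuallyEq ?_
  filter_upwards [Ioi_mem_nhds hlt] with y hy
  exact hu.eq_add_integral ha' (ha'.trans hy)

end IsRealSolution

end RealSolution

section Energy

theorem le_two_mul_of_abs_deriv_le {N k : ℝ → ℝ} {a b : ℝ}
    (hN : AbsolutelyContinuousOnInterval N a b) (hk : IntervalIntegrable k volume a b)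
    (hk0 : ∀ x, 0 ≤ k x) (hN0 : 0 ≤ N a) (hle : ∫ x in uIoc a b, k x ≤ 1 / 2)
    (hderiv : ∀ᵐ x, x ∈ uIcc a b → |deriv N x| ≤ k x * N x) : N b ≤ 2 * N a := by
  obtain ⟨y, hy, hymax⟩ := isCompact_uIcc.exists_isMaxOn nonempty_uIcc hN.continuousOn
  have hsub : uIcc a y ⊆ uIcc a b := uIcc_subset_uIcc left_mem_uIcc hy
  have hsub' : uIoc a y ⊆ uIoc a b := uIoc_subset_uIoc_of_uIcc_subset_uIcc hsub
  have hNy : 0 ≤ N y := hN0.trans (hymax left_mem_uIcc)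
  have hincr : N y - N a ≤ N y / 2 :=
    calc N y - N a ≤ ‖∫ x in a..y, deriv N x‖ := by
          rw [(hN.mono hsub).integral_deriv_eq_sub]
          exact le_abs_self _
      _ ≤ ∫ x in uIoc a y, ‖deriv N x‖ := intervalIntegral.norm_integral_le_integral_norm_uIoc
      _ ≤ ∫ x in uIoc a y, k x * N y := by
          refine setIntegral_mono_ae_restrict
            (intervalIntegrable_iff.1 (hN.mono hsub).intervalIntegrable_deriv).norm
            ((intervalIntegrable_iff.1 (hk.mono_set hsub)).mul_const _) ?_
          filter_upwards [ae_restrict_of_ae hderiv, ae_restrict_mem measurableSet_uIoc]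
            with x hx hxy
          have hxb := hsub (uIoc_subset_uIcc hxy)
          exact (hx hxb).trans (mul_le_mul_of_nonneg_left (hymax hxb) (hk0 x))
      _ = (∫ x in uIoc a y, k x) * N y := integral_mul_const _ _
      _ ≤ (∫ x in uIoc a b, k x) * N y := by
          gcongr
          · exact .of_forall hk0
          · exact intervalIntegrable_iff.1 hk
      _ ≤ 1 / 2 * N y := by gcongr
      _ = N y / 2 := by ring
  linarith [show N b ≤ N y from hymax right_mem_uIcc]

/-- `m` is, on `s`, a `C¹` solution of the Riccati equation `m' + m² = q` up to an error of small
integral, with imaginary part bounded away from `0`. -/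
structure IsApproxLogDeriv (q : ℝ → ℝ) (δ : ℝ) (s : Set ℝ) (m : ℝ → ℂ) : Prop where
  contDiffAt : ∀ x ∈ s, ContDiffAt ℝ 1 m x
  im_le : ∀ x ∈ s, (m x).im ≤ -δ
  integrableOn : IntegrableOn (fun x => deriv m x + m x ^ 2 - q x) s
  setIntegral_norm_le : ∫ x in s, ‖deriv m x + m x ^ 2 - q x‖ ≤ δ / 6

/-- The quadratic form in the initial data `(u, v)` at `x` which is a constant of the motion when
`m` solves the Riccati equation `m' + m² = q` exactly: it is then proportional to the squared
Wronskian of the real solution `u` of `u'' = q u` and the complex one with logarithmic derivative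
`m`. -/
noncomputable def solutionEnergy (m : ℝ → ℂ) (u v : ℝ → ℝ) (x : ℝ) : ℝ :=
  ‖(v x : ℂ) - m x * u x‖ ^ 2 / -(m x).im

variable {q u v : ℝ → ℝ} {m : ℝ → ℂ} {δ x c : ℝ} {s : Set ℝ}

theorem mul_sq_le_solutionEnergy (hδ : 0 < δ) (him : (m x).im ≤ -δ) :
    δ * u x ^ 2 ≤ solutionEnergy m u v x := by
  have hpos : 0 < -(m x).im := by linarith
  rw [solutionEnergy, le_div_iff₀ hpos, Complex.sq_norm, Complex.normSq_apply]
  simp only [Complex.sub_re, Complex.sub_im, Complex.mul_re, Complex.mul_im, Complex.ofReal_re,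
    Complex.ofReal_im]
  nlinarith [sq_nonneg (v x - (m x).re * u x), mul_nonneg hpos.le (sq_nonneg (u x))]

theorem hasDerivAt_solutionEnergy (him : (m x).im ≠ 0) (hm : DifferentiableAt ℝ m x)
    (hu : HasDerivAt u (v x) x) (hv : HasDerivAt v (q x * u x) x) {z e : ℂ}
    (hz : z = v x - m x * u x) (he : e = deriv m x + m x ^ 2 - q x) :
    HasDerivAt (solutionEnergy m u v) ((‖z‖ ^ 2 * e.im - 2 * inner ℝ z e * z.im) / (m x).im ^ 2)
      x := by
  have hz' : HasDerivAt (fun y => (v y : ℂ) - m y * u y) (-m x * z - e * u x) x := by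
    convert! hv.ofReal_comp.sub (hm.hasDerivAt.mul hu.ofReal_comp) using 1
    simp only [hz, he, Complex.ofReal_mul]
    ring
  have hinner : inner ℝ z (-m x * z - e * u x) = -(m x).re * ‖z‖ ^ 2 - inner ℝ z e * u x := by
    simp only [Complex.inner, Complex.sq_norm, Complex.normSq_apply, Complex.mul_re,
      Complex.mul_im, Complex.sub_re, Complex.sub_im, Complex.neg_re, Complex.neg_im,
      Complex.conj_re, Complex.conj_im, Complex.ofReal_re, Complex.ofReal_im]
    ring
  have hzim : z.im = -(m x).im * u x := by simp [hz]
  have heim : e.im = (deriv m x).im + 2 * (m x).re * (m x).im := by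
    simp only [he, pow_two, Complex.add_im, Complex.sub_im, Complex.mul_im, Complex.ofReal_im]
    ring
  have hden := (Complex.imCLM.hasFDerivAt.comp_hasDerivAt x hm.hasDerivAt).neg
  refine (hz'.norm_sq.div hden (neg_ne_zero.2 him)).congr_deriv ?_
  simp only [Pi.neg_apply, Function.comp_apply, Complex.imCLM_apply]
  rw [← hz, hinner, heim, hzim]
  ring

theorem abs_deriv_solutionEnergy_le (hδ : 0 < δ) (him : (m x).im ≤ -δ)
    (hm : DifferentiableAt ℝ m x) (hu : HasDerivAt u (v x) x) (hv : HasDerivAt v (q x * u x) x) :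
    |deriv (solutionEnergy m u v) x| ≤
      3 / δ * ‖deriv m x + m x ^ 2 - q x‖ * solutionEnergy m u v x := by
  set z : ℂ := v x - m x * u x with hz
  set e : ℂ := deriv m x + m x ^ 2 - q x with he
  have hδs : δ ≤ -(m x).im := by linarith
  have hpos : 0 < -(m x).im := hδ.trans_le hδs
  have habs : |‖z‖ ^ 2 * e.im - 2 * inner ℝ z e * z.im| ≤ 3 * ‖e‖ * ‖z‖ ^ 2 :=
    calc _ ≤ ‖z‖ ^ 2 * |e.im| + 2 * |inner ℝ z e| * |z.im| := by
          refine (abs_sub _ _).trans_eq ?_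
          simp only [abs_mul, abs_two, abs_pow, abs_norm]
      _ ≤ ‖z‖ ^ 2 * ‖e‖ + 2 * (‖z‖ * ‖e‖) * ‖z‖ := by
          gcongr
          exacts [Complex.abs_im_le_norm e, abs_real_inner_le_norm z e, Complex.abs_im_le_norm z]
      _ = 3 * ‖e‖ * ‖z‖ ^ 2 := by ring
  rw [(hasDerivAt_solutionEnergy (neg_ne_zero.1 hpos.ne') hm hu hv hz he).deriv, abs_div,
    ← neg_sq (m x).im, abs_of_pos (pow_pos hpos 2), solutionEnergy, ← hz]
  calc _ ≤ 3 * ‖e‖ * ‖z‖ ^ 2 / (-(m x).im) ^ 2 := by gcongr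
    _ = 3 / -(m x).im * ‖e‖ * (‖z‖ ^ 2 / -(m x).im) := by field_simp
    _ ≤ 3 / δ * ‖e‖ * (‖z‖ ^ 2 / -(m x).im) := by gcongr

theorem IsRealSolution.absolutelyContinuousOnInterval_solutionEnergy (hu : IsRealSolution q u v)
    (hδ : 0 < δ) (hm : IsApproxLogDeriv q δ (uIcc c x) m) (hc : 0 < c) (hx : 0 < x) :
    AbsolutelyContinuousOnInterval (solutionEnergy m u v) c x := by
  have hmC : ContDiffOn ℝ 1 m (uIcc c x) := fun y hy => (hm.contDiffAt y hy).contDiffWithinAt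
  have hre : AbsolutelyContinuousOnInterval (fun x => (m x).re) c x :=
    (Complex.reCLM.contDiff.comp_contDiffOn hmC).absolutelyContinuousOnInterval
  have him : ContDiffOn ℝ 1 (fun x => (m x).im) (uIcc c x) :=
    Complex.imCLM.contDiff.comp_contDiffOn hmC
  have hinv : AbsolutelyContinuousOnInterval (fun x => (-(m x).im)⁻¹) c x :=
    (him.neg.inv fun y hy => by linarith [hm.im_le y hy]).absolutelyContinuousOnInterval
  have huAC := hu.absolutelyContinuousOnInterval hc hx
  have hP := (hu.absolutelyContinuousOnInterval_deriv hc hx).sub (hre.mul huAC)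
  have hT := him.absolutelyContinuousOnInterval.mul huAC
  convert! ((hP.mul hP).add (hT.mul hT)).mul hinv using 1
  ext y
  simp [solutionEnergy, Complex.sq_norm, Complex.normSq_apply, div_eq_mul_inv]

theorem IsApproxLogDeriv.mono {s t : Set ℝ} (hm : IsApproxLogDeriv q δ t m) (hst : s ⊆ t) :
    IsApproxLogDeriv q δ s m where
  contDiffAt x hx := hm.contDiffAt x (hst hx)
  im_le x hx := hm.im_le x (hst hx)
  integrableOn := hm.integrableOn.mono_set hst
  setIntegral_norm_le := (setIntegral_mono_set hm.integrableOn.norm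
    (.of_forall fun _ => norm_nonneg _) hst.eventuallyLE).trans hm.setIntegral_norm_le

theorem IsRealSolution.mul_sq_le (hu : IsRealSolution q u v) (hδ : 0 < δ)
    (hm : IsApproxLogDeriv q δ (uIcc c x) m) (hc : 0 < c) (hx : 0 < x) :
    δ * u x ^ 2 ≤ 2 * solutionEnergy m u v c := by
  let k (y : ℝ) : ℝ := 3 / δ * ‖deriv m y + m y ^ 2 - q y‖
  have hint : IntegrableOn k (uIcc c x) := hm.integrableOn.norm.const_mul (3 / δ)
  have hk (y : ℝ) : 0 ≤ k y := by positivity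
  refine (mul_sq_le_solutionEnergy hδ (hm.im_le x right_mem_uIcc)).trans
    (le_two_mul_of_abs_deriv_le (hu.absolutelyContinuousOnInterval_solutionEnergy hδ hm hc hx)
      (intervalIntegrable_iff.2 (hint.mono_set uIoc_subset_uIcc)) hk
      ((by positivity : 0 ≤ δ * u c ^ 2).trans
        (mul_sq_le_solutionEnergy hδ (hm.im_le c left_mem_uIcc))) ?_ ?_)
  · calc ∫ y in uIoc c x, k y ≤ ∫ y in uIcc c x, k y :=
          setIntegral_mono_set hint (.of_forall hk) uIoc_subset_uIcc.eventuallyLE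
      _ ≤ 3 / δ * (δ / 6) := by
          rw [integral_const_mul]
          gcongr
          exact hm.setIntegral_norm_le
      _ = 1 / 2 := by field_simp; norm_num
  · filter_upwards [hu.ae_hasDerivAt_deriv hc hx] with y hy hcy
    exact abs_deriv_solutionEnergy_le hδ (hm.im_le y hcy)
      ((hm.contDiffAt y hcy).differentiableAt one_ne_zero)
      (hu.hasDerivAt y ((lt_min hc hx).trans_le hcy.1)) (hy hcy)

theorem IsRealSolution.exists_abs_le_on (hu : IsRealSolution q u v) (hδ : 0 < δ)
    (hm : IsApproxLogDeriv q δ s m) (hs : s.OrdConnected) (hs0 : s ⊆ Ioi 0) :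
    ∃ C, ∀ x ∈ s, |u x| ≤ C := by
  rcases s.eq_empty_or_nonempty with rfl | ⟨c, hc⟩
  · exact ⟨0, by simp⟩
  refine ⟨√(2 * solutionEnergy m u v c / δ), fun x hx => Real.abs_le_sqrt ?_⟩
  rw [le_div_iff₀' hδ]
  exact hu.mul_sq_le hδ (hm.mono (hs.uIcc_subset hc hx)) (hs0 hc) (hs0 hx)

end Energy

section Boundedness

theorem exists_setIntegral_Ioc_le {f : ℝ → ℝ} {b ε : ℝ} (hb : 0 < b)
    (hf : IntegrableOn f (Ioc 0 b)) (hε : 0 < ε) : ∃ τ ∈ Ioc 0 b, ∫ x in Ioc 0 τ, f x ≤ ε := by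
  have hanti : Antitone fun n : ℕ => Ioc 0 (b / (n + 1)) := fun n k hnk =>
    Ioc_subset_Ioc_right (by gcongr)
  have hempty : ⋂ n : ℕ, Ioc 0 (b / (n + 1)) = ∅ := by
    refine eq_empty_of_forall_notMem fun x hx => ?_
    rw [mem_iInter] at hx
    obtain ⟨n, hn⟩ := exists_nat_gt (b / x)
    have := (hx 0).1
    have := (le_div_iff₀ (by positivity)).1 (hx n).2
    have := (div_lt_iff₀ (hx 0).1).1 hn
    linarith
  have hlim := tendsto_setIntegral_of_antitone (fun _ => measurableSet_Ioc) hanti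
    ⟨0, by simpa using hf⟩
  rw [hempty, setIntegral_empty] at hlim
  obtain ⟨n, hn⟩ := (hlim.eventually_le_const hε).exists
  exact ⟨_, ⟨by positivity, div_le_self hb.le (by simp)⟩, hn⟩

theorem eventually_setIntegral_Ici_le {f : ℝ → ℝ} {b ε : ℝ} (hf : IntegrableOn f (Ici b))
    (hε : 0 < ε) : ∀ᶠ a in atTop, ∫ x in Ici a, f x ≤ ε := by
  have hempty : ⋂ a : ℝ, Ici a = ∅ := by
    refine eq_empty_of_forall_notMem fun x hx => ?_
    exact absurd (mem_iInter.1 hx (x + 1)) (by simp)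
  have hlim := tendsto_setIntegral_of_antitone (fun _ => measurableSet_Ici) antitone_Ici ⟨b, hf⟩
  rw [hempty, setIntegral_empty] at hlim
  exact hlim.eventually_le_const hε

theorem exists_isApproxLogDeriv_Ioc {V : ℝ → ℝ} (hV : IntegrableOn V (Ioc 0 1)) (E : ℝ) :
    ∃ τ > 0, IsApproxLogDeriv (fun x => V x - E) 1 (Ioc 0 τ) fun _ => -Complex.I := by
  have he : IntegrableOn (fun x => deriv (fun _ : ℝ => -Complex.I) x + (-Complex.I) ^ 2 -
      ((V x - E : ℝ) : ℂ)) (Ioc 0 1) := by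
    simp only [deriv_const]
    exact (integrable_const _).sub ((hV.sub (integrable_const E)).ofReal (𝕜 := ℂ))
  obtain ⟨τ, ⟨hτ0, hτ1⟩, hτ⟩ := exists_setIntegral_Ioc_le one_pos he.norm
    (by norm_num : (0 : ℝ) < 1 / 6)
  exact ⟨τ, hτ0, fun x _ => contDiffAt_const, fun x _ => by simp,
    he.mono_set (Ioc_subset_Ioc_right hτ1), hτ⟩

theorem deriv_add_sq_sub_eq {η : ℂ} (hη : η ≠ 0) (w : ℂ) {A : ℝ → ℂ} {x : ℝ}
    (hA : DifferentiableAt ℝ A x) (hx : A x ≠ 0) :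
    deriv (fun x => Complex.I * η * (A x - 2) / A x) x + (Complex.I * η * (A x - 2) / A x) ^ 2 -
        (w - η ^ 2) = 2 * Complex.I * η / A x ^ 2 *
      (deriv A x - (2 * Complex.I * η * (A x - 1) + w / (2 * Complex.I * η) * A x ^ 2)) := by
  have hderiv := hA.hasDerivAt
  rw [(((hderiv.sub_const 2).const_mul (Complex.I * η)).fun_div hderiv hx).deriv]
  field_simp
  ring_nf
  simp only [Complex.I_sq]
  ring

theorem IsApproxRiccati.exists_isApproxLogDeriv_Ici {η : ℝ} (hη : 0 < η) {V : ℝ → ℝ} {A : ℝ → ℂ}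
    (hA : IsApproxRiccati η (fun x => (V x : ℂ)) A) :
    ∃ x₁ > 0, IsApproxLogDeriv (fun x => V x - η ^ 2) (η / 2) (Ici x₁)
      fun x => Complex.I * η * (A x - 2) / A x := by
  let m (x : ℝ) : ℂ := Complex.I * η * (A x - 2) / A x
  have him : Tendsto (fun x => (m x).im) atTop (𝓝 (-η)) := by
    have hm := ((hA.tendsto.sub_const 2).const_mul (Complex.I * η)).div hA.tendsto one_ne_zero
    convert! (Complex.continuous_im.tendsto _).comp hm using 2
    norm_num
  have hA2 : ∀ᶠ x in atTop, 1 / 2 ≤ ‖A x‖ :=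
    hA.tendsto.norm.eventually_const_le (by norm_num)
  obtain ⟨b, hb0, hb⟩ := ((eventually_gt_atTop 0).and (eventually_forall_ge_atTop.2
    (hA2.and (him.eventually_le_const (by linarith : -η < -(η / 2)))))).exists
  have hne (x : ℝ) (hx : b ≤ x) : A x ≠ 0 := norm_pos_iff.1 (one_half_pos.trans_le (hb x hx).1)
  have he : IntegrableOn (fun x => deriv m x + m x ^ 2 - ((V x - η ^ 2 : ℝ) : ℂ)) (Ici b) := by
    refine IntegrableOn.congr_fun ((hA.integrableOn.mono_set (Ici_subset_Ioi.2 hb0)).bdd_mul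
      (f := fun x => 2 * Complex.I * η / A x ^ 2) (c := 8 * η) ?_ ?_) (fun x hx => ?_)
      measurableSet_Ici
    · exact (continuousOn_const.div (hA.contDiff.continuous.pow 2).continuousOn fun x hx =>
        pow_ne_zero 2 (hne x hx)).aestronglyMeasurable measurableSet_Ici
    · filter_upwards [ae_restrict_mem measurableSet_Ici] with x hx
      simp only [norm_div, norm_mul, Complex.norm_ofNat, Complex.norm_I, Complex.norm_real,
        Real.norm_of_nonneg hη.le, norm_pow]
      calc 2 * 1 * η / ‖A x‖ ^ 2 ≤ 2 * 1 * η / (1 / 2) ^ 2 := by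
            gcongr
            exact (hb x hx).1
        _ = 8 * η := by ring
    · push_cast
      exact (deriv_add_sq_sub_eq (Complex.ofReal_ne_zero.2 hη.ne') _
        (hA.contDiff.differentiable one_ne_zero x) (hne x hx)).symm
  obtain ⟨x₁, hx₁, hbx₁⟩ := ((eventually_setIntegral_Ici_le he.norm
    (by positivity : 0 < η / 2 / 6)).and (eventually_ge_atTop b)).exists
  refine ⟨x₁, hb0.trans_le hbx₁, fun x hx => ?_, fun x hx => (hb x (hbx₁.trans hx)).2,
    he.mono_set (Ici_subset_Ici.2 hbx₁), hx₁⟩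
  simp only [div_eq_mul_inv]
  exact (contDiffAt_const.mul (hA.contDiff.contDiffAt.sub contDiffAt_const)).mul
    (hA.contDiff.contDiffAt.inv (hne x (hbx₁.trans hx)))

theorem IsApproxRiccati.exists_abs_le {η : ℝ} (hη : 0 < η) {V : ℝ → ℝ} {A : ℝ → ℂ}
    (hA : IsApproxRiccati η (fun x => (V x : ℂ)) A) (hV : IntegrableOn V (Ioc 0 1))
    {u v : ℝ → ℝ} (hu : IsRealSolution (fun x => V x - η ^ 2) u v) :
    ∃ C, ∀ x ∈ Ioi 0, |u x| ≤ C := by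
  obtain ⟨τ, hτ, hzero⟩ := exists_isApproxLogDeriv_Ioc hV (η ^ 2)
  obtain ⟨x₁, hx₁, hinf⟩ := hA.exists_isApproxLogDeriv_Ici hη
  obtain ⟨C₁, hC₁⟩ := hu.exists_abs_le_on one_pos hzero ordConnected_Ioc fun x hx => hx.1
  obtain ⟨C₂, hC₂⟩ := isCompact_Icc.exists_bound_of_continuousOn (s := Icc τ x₁) (f := u)
    fun x hx => (hu.hasDerivAt x (hτ.trans_le hx.1)).continuousAt.continuousWithinAt
  obtain ⟨C₃, hC₃⟩ := hu.exists_abs_le_on (half_pos hη) hinf ordConnected_Ici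
    (Ici_subset_Ioi.2 hx₁)
  refine ⟨max C₁ (max C₂ C₃), fun x hx => ?_⟩
  rcases le_total x τ with h | hτx
  · exact (hC₁ x ⟨hx, h⟩).trans (le_max_left _ _)
  rcases le_total x x₁ with h | h
  · exact (hC₂ x ⟨hτx, h⟩).trans ((le_max_left _ _).trans (le_max_right _ _))
  · exact (hC₃ x h).trans ((le_max_right _ _).trans (le_max_right _ _))

theorem IsApproxRiccati.exists_norm_le_of_isWeakSolution {η : ℝ} (hη : 0 < η) {V : ℝ → ℝ}
    {A : ℝ → ℂ} (hA : IsApproxRiccati η (fun x => (V x : ℂ)) A) (hV : IntegrableOn V (Ioc 0 1))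
    {u u' : ℝ → ℂ} (hu : IsWeakSolution V (η ^ 2) u u') : ∃ C, ∀ x ∈ Ioi 0, ‖u x‖ ≤ C := by
  obtain ⟨C₁, hC₁⟩ := hA.exists_abs_le hη hV (hu.isRealSolution Complex.reCLM)
  obtain ⟨C₂, hC₂⟩ := hA.exists_abs_le hη hV (hu.isRealSolution Complex.imCLM)
  exact ⟨C₁ + C₂, fun x hx => (Complex.norm_le_abs_re_add_abs_im _).trans
    (add_le_add (hC₁ x hx) (hC₂ x hx))⟩

end Boundedness

section OscillatingPotential

/-- The potential `∑ cₖ e^{-iφₖx} γₖ(x)`, a superposition of waves of frequencies `φₖ` with slowly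
varying amplitudes `cₖ γₖ`. -/
noncomputable def oscillatingPotential {ι : Type*} (c : ι → ℂ) (φ : ι → ℝ) (γ : ι → ℝ → ℂ)
    (x : ℝ) : ℂ :=
  ∑' k, c k * Complex.exp (-Complex.I * φ k * x) * γ k x

variable {ι : Type*} {c : ι → ℂ} {φ : ι → ℝ} {γ δ : ι → ℝ → ℂ} {B M : ℝ≥0}

theorem summable_oscillatingPotential (hc : Summable fun k => ‖c k‖) {x : ℝ}
    (hγ : ∀ k, ‖γ k x‖₊ ≤ B) :
    Summable fun k => c k * Complex.exp (-Complex.I * φ k * x) * γ k x := by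
  refine .of_norm_bounded (hc.mul_right (B : ℝ)) fun k => ?_
  rw [norm_mul, norm_mul, norm_exp_neg_I_mul_mul, mul_one]
  gcongr
  exact hγ k

theorem oscillatingPotential_sub (hc : Summable fun k => ‖c k‖) {x : ℝ}
    (hγ : ∀ k, ‖γ k x‖₊ ≤ B) (hδ : ∀ k, ‖δ k x‖₊ ≤ B) :
    oscillatingPotential c φ (fun k x => γ k x - δ k x) x =
      oscillatingPotential c φ γ x - oscillatingPotential c φ δ x := by
  simp only [oscillatingPotential, mul_sub]
  exact (summable_oscillatingPotential hc hγ).tsum_sub (summable_oscillatingPotential hc hδ)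

variable [Countable ι]

theorem integrable_oscillatingPotential {μ : Measure ℝ} (hc : Summable fun k => ‖c k‖)
    (hγ : ∀ k, AEMeasurable (γ k) μ) (hint : ∀ k, ∫⁻ x, ‖γ k x‖ₑ ∂μ ≤ B) :
    Integrable (oscillatingPotential c φ γ) μ := by
  refine integrable_tsum_of_lintegral_le (u := fun k => ‖c k‖₊ * B) (fun k => ?_)
    ((NNReal.summable_coe.1 hc).mul_right B) fun k => ?_
  · exact (by fun_prop : Measurable fun x : ℝ =>
      c k * Complex.exp (-Complex.I * φ k * x)).aemeasurable.mul (hγ k)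
  · simp only [enorm_mul, enorm_exp_neg_I_mul_mul, mul_one]
    rw [lintegral_const_mul' _ _ enorm_ne_top, ENNReal.coe_mul]
    gcongr
    exacts [le_rfl, hint k]

theorem integrableOn_oscillatingPotential_Ioc {p : ℕ} (hp : p ≠ 0)
    (hc : Summable fun k => ‖c k‖) (hM : ∀ k, eVariationOn (γ k) (Ioi 0) ≤ M)
    (hL : ∀ k, ∫⁻ x in Ioi 0, ‖γ k x‖ₑ ^ p ≤ M) :
    IntegrableOn (oscillatingPotential c φ γ) (Ioc 0 1) := by
  obtain ⟨B, -, hB⟩ := exists_smoothing_bound hp M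
  refine integrable_oscillatingPotential (B := B) hc (fun k => ?_) fun k => ?_
  · exact (aemeasurable_restrict_of_boundedVariationOn measurableSet_Ioi
      (ne_top_of_le_ne_top ENNReal.coe_ne_top (hM k))).mono_set Ioc_subset_Ioi_self
  · calc ∫⁻ x in Ioc 0 1, ‖γ k x‖ₑ ≤ ∫⁻ _ in Ioc (0 : ℝ) 1, B :=
          setLIntegral_mono' measurableSet_Ioc fun x hx =>
            enorm_le_coe.2 ((hB _ (hM k) (hL k)).1 x hx.1)
      _ = B := by simp

theorem integrableOn_oscillatingPotential_sub_smoothing {p : ℕ} (hp : p ≠ 0)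
    (hc : Summable fun k => ‖c k‖) (hM : ∀ k, eVariationOn (γ k) (Ioi 0) ≤ M)
    (hL : ∀ k, ∫⁻ x in Ioi 0, ‖γ k x‖ₑ ^ p ≤ M) :
    IntegrableOn (fun x => oscillatingPotential c φ γ x -
      oscillatingPotential c φ (fun k => smoothing (γ k)) x) (Ioi 0) := by
  obtain ⟨B, -, hB⟩ := exists_smoothing_bound hp M
  choose hγ hmod _ hsub using fun k => hB (γ k) (hM k) (hL k)
  have hdiff : IntegrableOn (oscillatingPotential c φ fun k x => γ k x - smoothing (γ k) x)
      (Ioi 0) := by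
    refine integrable_oscillatingPotential (B := B) hc (fun k => ?_) fun k => ?_
    · exact (aemeasurable_restrict_of_boundedVariationOn measurableSet_Ioi
        (ne_top_of_le_ne_top ENNReal.coe_ne_top (hM k))).sub
        (hmod k).contDiff.continuous.measurable.aemeasurable
    · simpa only [enorm_sub_rev] using hsub k
  exact hdiff.congr_fun (fun x hx => oscillatingPotential_sub hc (fun k => hγ k x hx)
    fun k => (hmod k).nnnorm_le x) measurableSet_Ioi

theorem exists_isApproxRiccati_oscillatingPotential {p : ℕ} (hp : p ≠ 0)
    (hc : Summable fun k => ‖c k‖) (hM : ∀ k, eVariationOn (γ k) (Ioi 0) ≤ M)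
    (hL : ∀ k, ∫⁻ x in Ioi 0, ‖γ k x‖ₑ ^ p ≤ M) {η : ℝ} (hne : ∀ t, 2 * η + treeFreq φ t ≠ 0)
    (ha : Summable fun t => ‖truncCoeff p c φ η t‖) :
    ∃ A, IsApproxRiccati η (oscillatingPotential c φ γ) A := by
  obtain ⟨B, hB1, hB⟩ := exists_smoothing_bound hp M
  choose _ hmod hpow _ using fun k => hB (γ k) (hM k) (hL k)
  let f (k : ι) (x : ℝ) : ℂ := Complex.exp (-Complex.I * φ k * x) * smoothing (γ k) x
  have hf (k : ι) : IsModulated (φ k) B B (f k) := by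
    simpa only [add_zero, one_mul, zero_mul] using (IsModulated.exp (φ k)).mul (hmod k)
  have hLf (k : ι) : ∫⁻ x in Ioi 0, ‖f k x‖ₑ ^ p ≤ B := by
    simpa only [f, enorm_mul, enorm_exp_neg_I_mul_mul, one_mul] using hpow k
  have hA := isApproxRiccati_tsum_truncCoeff_mul_prod hp hne hc ha hB1 hf hLf
  simp only [f, ← mul_assoc] at hA
  exact ⟨_, hA.congr_potential (integrableOn_oscillatingPotential_sub_smoothing hp hc hM hL)⟩

end OscillatingPotential

section ExceptionalSet

variable {ι : Type*} [Countable ι] {p : ℕ} {α : ℝ} {c : ι → ℂ} {φ : ι → ℝ} {γ : ι → ℝ → ℂ}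

theorem IsWeakSolution.exists_norm_le_of_rieszPotential_ne_top (hp : p ≠ 0) (hα0 : 0 < α)
    (hα1 : α ≤ 1) (hBV : ⨆ k, eVariationOn (γ k) (Ioi 0) < ⊤)
    (hLp : ⨆ k, ∫⁻ x in Ioi 0, ‖γ k x‖ₑ ^ p < ⊤) (hc : ∑' k, ‖c k‖ₑ ^ α ≠ ⊤) {V : ℝ → ℝ}
    (hV : ∀ x ∈ Ioi 0, (V x : ℂ) = oscillatingPotential c φ γ x) {η : ℝ} (hη : 0 < η)
    (hne : ∀ t, 2 * η + treeFreq φ t ≠ 0)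
    (hpot : rieszPotential (treeMeasure p (fun k => ‖c k‖ₑ ^ α) φ) (((p : ℝ) - 1) * α) (2 * η) ≠ ⊤)
    {u u' : ℝ → ℂ} (hu : IsWeakSolution V (η ^ 2) u u') : ∃ C, ∀ x ∈ Ioi 0, ‖u x‖ ≤ C := by
  obtain ⟨M, hM, -⟩ := ENNReal.lt_iff_exists_coe.1 (max_lt hBV hLp)
  have hvar (k : ι) : eVariationOn (γ k) (Ioi 0) ≤ M :=
    (le_iSup (fun k => eVariationOn (γ k) (Ioi 0)) k).trans ((le_max_left _ _).trans_eq hM)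
  have hint (k : ι) : ∫⁻ x in Ioi 0, ‖γ k x‖ₑ ^ p ≤ M :=
    (le_iSup (fun k => ∫⁻ x in Ioi 0, ‖γ k x‖ₑ ^ p) k).trans ((le_max_right _ _).trans_eq hM)
  have hc1 : Summable fun k => ‖c k‖ :=
    tsum_enorm_ne_top_iff_summable_norm.1 (tsum_ne_top_of_tsum_rpow_ne_top hα0 hα1 hc)
  have ha : Summable fun t => ‖truncCoeff p c φ η t‖ := tsum_enorm_ne_top_iff_summable_norm.1
    (tsum_enorm_truncCoeff_ne_top hp hα0 hα1 hc hη.ne' hpot)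
  obtain ⟨A, hA⟩ := exists_isApproxRiccati_oscillatingPotential hp hc1 hvar hint hne ha
  have hAV : IsApproxRiccati η (fun x => (V x : ℂ)) A := hA.congr_potential <|
    integrableOn_zero.congr_fun (fun x hx => (sub_eq_zero.2 (hV x hx)).symm) measurableSet_Ioi
  have hV1 : IntegrableOn V (Ioc 0 1) :=
    IntegrableOn.congr_fun
      (integrableOn_oscillatingPotential_Ioc (φ := φ) hp hc1 hvar hint).re
      (fun x hx => by simp [← hV x hx.1]) measurableSet_Ioc
  exact hAV.exists_norm_le_of_isWeakSolution hη hV1 hu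

theorem dimH_image_le_of_contDiff {E F : Type*} [NormedAddCommGroup E] [NormedSpace ℝ E]
    [FiniteDimensional ℝ E] [NormedAddCommGroup F] [NormedSpace ℝ F] {f : E → F}
    (hf : ContDiff ℝ 1 f) (S : Set E) : dimH (f '' S) ≤ dimH S :=
  hf.contDiffOn.dimH_image_le convex_univ (subset_univ S)

theorem dimH_rieszPotential_treeMeasure_union_le {w : ι → ℝ≥0∞} (hw : ∑' k, w k ≠ ⊤) {s : ℝ}
    (hs : 0 ≤ s) :
    dimH ({x | rieszPotential (treeMeasure p w φ) s x = ⊤} ∪ range fun t => -treeFreq φ t) ≤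
      ENNReal.ofReal s := by
  have := isFiniteMeasure_treeMeasure hw p φ
  rw [dimH_union, (countable_range _).dimH_zero]
  exact max_le (dimH_rieszPotential_eq_top_le hs) zero_le

end ExceptionalSet

theorem stmt0_general {ι : Type*} [Countable ι] (p : ℕ) (hp : p ≠ 0) (α : ℝ) (hα0 : 0 < α)
    (hα1 : α ≤ 1) (c : ι → ℂ) (φ : ι → ℝ) (γ : ι → ℝ → ℂ)
    (hBV : ⨆ k, eVariationOn (γ k) (Set.Ioi 0) < ⊤)
    (hLp : ⨆ k, ∫⁻ x in Set.Ioi (0 : ℝ), ‖γ k x‖ₑ ^ p < ⊤)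
    (hc : Summable fun k => ‖c k‖ ^ α) (V : ℝ → ℝ)
    (hV : ∀ x ∈ Set.Ioi (0 : ℝ),
      (V x : ℂ) = ∑' k, c k * Complex.exp (-Complex.I * (φ k) * x) * γ k x) :
    dimH {E : ℝ | 0 < E ∧ ∃ u u' : ℝ → ℂ, IsWeakSolution V E u u' ∧
        ¬ ∃ C : ℝ, ∀ x ∈ Set.Ioi (0 : ℝ), ‖u x‖ ≤ C} ≤
      ENNReal.ofReal (((p : ℝ) - 1) * α) := by
  have hs : 0 ≤ ((p : ℝ) - 1) * α :=
    mul_nonneg (sub_nonneg.2 (Nat.one_le_cast.2 (Nat.one_le_iff_ne_zero.2 hp))) hα0.le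
  have hc' : ∑' k, ‖c k‖ₑ ^ α ≠ ⊤ := by
    convert! hc.tsum_ofReal_ne_top using 3 with k
    rw [← ofReal_norm, ENNReal.ofReal_rpow_of_nonneg (norm_nonneg _) hα0.le]
  have hsmooth : ContDiff ℝ 1 fun x : ℝ => x ^ 2 / 4 := by fun_prop
  refine (dimH_mono ?_).trans ((dimH_image_le_of_contDiff hsmooth _).trans
    (dimH_rieszPotential_treeMeasure_union_le (p := p) (φ := φ) hc' hs))
  rintro E ⟨hE, u, u', hu, hunbounded⟩
  have hsq : √E ^ 2 = E := Real.sq_sqrt hE.le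
  refine ⟨2 * √E, ?_, by linear_combination hsq⟩
  by_contra hnot
  simp only [mem_union, mem_ofPred_eq, mem_range, not_or, not_exists] at hnot
  refine hunbounded (IsWeakSolution.exists_norm_le_of_rieszPotential_ne_top hp hα0 hα1 hBV hLp hc'
    hV (Real.sqrt_pos.2 hE) (fun t ht => hnot.2 t ?_) hnot.1 (hsq.symm ▸ hu))
  linear_combination -ht

theorem stmt0 (p : ℕ) (hp : 2 ≤ p) (α : ℝ) (hα0 : 0 < α) (hα1 : α < 1 / ((p : ℝ) - 1))
    (c : ℕ → ℂ) (φ : ℕ → ℝ) (γ : ℕ → ℝ → ℂ)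
    (hBV : ⨆ k, eVariationOn (γ k) (Set.Ioi 0) < ⊤)
    (hLp : ∫⁻ x in Set.Ioi (0:ℝ), (⨆ k, (‖γ k x‖₊ : ℝ≥0∞)) ^ p < ⊤)
    (hc : Summable fun k => ‖c k‖ ^ α)
    (V : ℝ → ℝ)
    (hV : ∀ x ∈ Set.Ioi (0:ℝ),
      (V x : ℂ) = ∑' k, c k * Complex.exp (-Complex.I * (φ k) * x) * γ k x) :
    dimH {E : ℝ | 0 < E ∧ ∃ u u' : ℝ → ℂ, IsWeakSolution V E u u' ∧
        ¬ ∃ C : ℝ, ∀ x ∈ Set.Ioi (0:ℝ), ‖u x‖ ≤ C} ≤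
      ENNReal.ofReal (((p : ℝ) - 1) * α) := by
  have hp' : (2 : ℝ) ≤ p := mod_cast hp
  have hα : α ≤ 1 := hα1.le.trans (div_le_one_of_le₀ (by linarith) (by linarith))
  have hLp' : ⨆ k, ∫⁻ x in Ioi 0, ‖γ k x‖ₑ ^ p ≤ ∫⁻ x in Ioi 0, (⨆ k, (‖γ k x‖₊ : ℝ≥0∞)) ^ p :=
    iSup_le fun k => lintegral_mono fun x =>
      pow_le_pow_left₀ zero_le (le_iSup (fun k => (‖γ k x‖₊ : ℝ≥0∞)) k) p
  exact stmt0_general p (by omega) α hα0 hα c φ γ hBV (hLp'.trans_lt hLp) hc V hV
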